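/- arXiv:2301.05153 — 2 statements merged into one kernel-verified Lean document; each statement's English description precedes it below -/
import Mathlib

section
/- Let m be a multicore. Then there exist a multicore μ in the core block C of m and a sequence of multicores m = m_0, m_1, …, m_{s−1}, m_s = μ such that: (1) the core block of m_t is C for all t = 0,…,s; (2) m_{t+1} = s^{jk}_{il}(m_t) for some j,k ∈ {1,…,r} and i,l ∈ {0,…,e−1}, for all t = 0,…,s−1; (3) there exists 0 ≤ v ≤ s such that (i) w(m_{t+1}) < w(m_t) for all t = 0,…,v−1 and w(m_{t+1}) ≤ w(m_t) for all t = v,…,s−1, and (ii) |γ^{jk}_{il}(m_v)| ≤ 2 for all i,l ∈ {0,…,e−1} and j,k ∈ {1,…,r}. -/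
/-!
Combinatorial framework for multipartitions, residues, β-sets, abacus levels,
weights, hubs, core blocks and Scopes-type moves, following Fayers and the paper.
Rows and columns of Young diagrams are indexed from 0, so the node in row `b`
and column `c` (0-based) of component `j` has residue `a j + c - b` mod `e`.
-/

open scoped Classical

namespace AK

/-- A partition, given by its (antitone, finitely supported) sequence of parts,
rows indexed from `0`. -/
structure PartitionFun : Type where
  part : ℕ → ℕ
  antitone : Antitone part
  finite_support : ∃ N, ∀ b, N ≤ b → part b = 0

/-- The node in row `b`, column `c` (0-based) belongs to the Young diagram. -/
def PartitionFun.InDiag (lam : PartitionFun) (b c : ℕ) : Prop := c < lam.part b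

/-- The node `(b,c)` is removable: deleting it leaves the diagram of a partition. -/
def PartitionFun.Removable (lam : PartitionFun) (b c : ℕ) : Prop :=
  lam.part b = c + 1 ∧ lam.part (b + 1) ≤ c

/-- The node `(b,c)` is addable: adjoining it gives the diagram of a partition. -/
def PartitionFun.Addable (lam : PartitionFun) (b c : ℕ) : Prop :=
  lam.part b = c ∧ (b = 0 ∨ lam.part b < lam.part (b - 1))

/-- An `r`-multipartition. -/
abbrev Multipartition (r : ℕ) := Fin r → PartitionFun

/-- Nodes: `(b, c, j)` with row `b`, column `c`, component `j`. -/
abbrev Node (r : ℕ) := ℕ × ℕ × Fin r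

/-- The Young diagram of a multipartition, as a set of nodes. -/
def diag {r : ℕ} (lam : Multipartition r) : Set (Node r) :=
  {x | (lam x.2.2).InDiag x.1 x.2.1}

/-- The size `n` of a multipartition of `n`. -/
noncomputable def msize {r : ℕ} (lam : Multipartition r) : ℕ :=
  Set.ncard (diag lam)

/-- `c_i(λ)`: the number of nodes of residue `i` (mod `e`). -/
noncomputable def nodeCount {r : ℕ} (e : ℕ) (a : Fin r → ℤ) (lam : Multipartition r)
    (i : ℤ) : ℕ :=
  Set.ncard {x : Node r | (lam x.2.2).InDiag x.1 x.2.1 ∧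
    (a x.2.2 + (x.2.1 : ℤ) - (x.1 : ℤ)) % (e : ℤ) = i % e}

/-- Number of removable nodes of residue `i` in component `j`. -/
noncomputable def removableCount {r : ℕ} (e : ℕ) (a : Fin r → ℤ) (lam : Multipartition r)
    (i : ℤ) (j : Fin r) : ℕ :=
  Set.ncard {p : ℕ × ℕ | (lam j).Removable p.1 p.2 ∧
    (a j + (p.2 : ℤ) - (p.1 : ℤ)) % (e : ℤ) = i % e}

/-- Number of addable nodes of residue `i` in component `j`. -/
noncomputable def addableCount {r : ℕ} (e : ℕ) (a : Fin r → ℤ) (lam : Multipartition r)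
    (i : ℤ) (j : Fin r) : ℕ :=
  Set.ncard {p : ℕ × ℕ | (lam j).Addable p.1 p.2 ∧
    (a j + (p.2 : ℤ) - (p.1 : ℤ)) % (e : ℤ) = i % e}

/-- `δ^j_i(λ)` = (removable `i`-nodes of component `j`) − (addable `i`-nodes of component `j`). -/
noncomputable def delta {r : ℕ} (e : ℕ) (a : Fin r → ℤ) (lam : Multipartition r)
    (i : ℤ) (j : Fin r) : ℤ :=
  (removableCount e a lam i j : ℤ) - (addableCount e a lam i j : ℤ)

/-- The hub `δ_i(λ) = Σ_j δ^j_i(λ)`. -/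
noncomputable def hub {r : ℕ} (e : ℕ) (a : Fin r → ℤ) (lam : Multipartition r) (i : ℤ) : ℤ :=
  ∑ j : Fin r, delta e a lam i j

/-- Two multipartitions have the same hub. -/
def SameHub {r : ℕ} (e : ℕ) (a : Fin r → ℤ) (lam mu : Multipartition r) : Prop :=
  ∀ i : ℤ, hub e a lam i = hub e a mu i

/-- `d_i(m) = min { δ^j_i(m) : 1 ≤ j ≤ r }`. -/
noncomputable def dmin {r : ℕ} (e : ℕ) (a : Fin r → ℤ) (lam : Multipartition r) (i : ℤ) : ℤ :=
  sInf {x : ℤ | ∃ j : Fin r, delta e a lam i j = x}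

/-- The weight `w(λ) = Σ_j c_{a_j}(λ) − (1/2) Σ_{i∈ℤ/eℤ} (c_i(λ) − c_{i+1}(λ))²`. -/
noncomputable def weight {r : ℕ} (e : ℕ) (a : Fin r → ℤ) (lam : Multipartition r) : ℚ :=
  (∑ j : Fin r, (nodeCount e a lam (a j) : ℚ)) -
    (1 / 2 : ℚ) * ∑ i ∈ Finset.range e,
      ((nodeCount e a lam (i : ℤ) : ℚ) - (nodeCount e a lam ((i : ℤ) + 1) : ℚ)) ^ 2

/-- The β-set `B^j = {λ_b + a_j − b : b ≥ 1}` (here with rows indexed from 0). -/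
def betaSet (aj : ℤ) (lam : PartitionFun) : Set ℤ :=
  {x | ∃ b : ℕ, x = (lam.part b : ℤ) + aj - ((b : ℤ) + 1)}

/-- A partition is an `e`-core: `β ∈ B` implies `β − e ∈ B`. -/
def IsECore (e : ℕ) (aj : ℤ) (lam : PartitionFun) : Prop :=
  ∀ x ∈ betaSet aj lam, x - (e : ℤ) ∈ betaSet aj lam

/-- A multicore: all components are `e`-cores. -/
def IsMulticore {r : ℕ} (e : ℕ) (a : Fin r → ℤ) (lam : Multipartition r) : Prop :=
  ∀ j, IsECore e (a j) (lam j)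

/-- `ℓ^a_{ij}(λ)`: the level of the lowest bead on runner `i`, i.e. the largest `x`
with `x·e + i` in the β-set. -/
noncomputable def level (e : ℕ) (aj : ℤ) (lam : PartitionFun) (i : ℕ) : ℤ :=
  sSup {x : ℤ | x * (e : ℤ) + (i : ℤ) ∈ betaSet aj lam}

/-- `γ^{jk}_i(λ) = ℓ^a_{ij}(λ) − ℓ^a_{ik}(λ)`. -/
noncomputable def gamma {r : ℕ} (e : ℕ) (a : Fin r → ℤ) (lam : Multipartition r)
    (i : ℕ) (j k : Fin r) : ℤ :=
  level e (a j) (lam j) i - level e (a k) (lam k) i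

/-- `γ^{jk}_{il}(λ) = γ^{jk}_i(λ) − γ^{jk}_l(λ)`. -/
noncomputable def gammaD {r : ℕ} (e : ℕ) (a : Fin r → ℤ) (lam : Multipartition r)
    (i l : ℕ) (j k : Fin r) : ℤ :=
  gamma e a lam i j k - gamma e a lam l j k

/-- Move a bead from runner `i` to runner `l` in the β-set `S`: replace the largest
element of `S` congruent to `i` mod `e` by the smallest integer congruent to `l`
mod `e` not in `S`. -/
noncomputable def moveBead (e : ℕ) (i l : ℕ) (S : Set ℤ) : Set ℤ :=
  insert (sInf {x : ℤ | x % (e : ℤ) = (l : ℤ) % e ∧ x ∉ S})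
    (S \ {sSup {x : ℤ | x % (e : ℤ) = (i : ℤ) % e ∧ x ∈ S}})

/-- The effect of `s^{jk}_{il}` on the tuple of β-sets: move a bead from runner `i`
to runner `l` in component `j`, and from runner `l` to runner `i` in component `k`. -/
noncomputable def swapSets {r : ℕ} (e i l : ℕ) (j k : Fin r) (S : Fin r → Set ℤ) :
    Fin r → Set ℤ :=
  Function.update (Function.update S j (moveBead e i l (S j))) k
    (moveBead e l i (Function.update S j (moveBead e i l (S j)) k))

/-- `m' = s^{jk}_{il}(m)`, expressed via β-sets. -/
def IsSwap {r : ℕ} (e : ℕ) (a : Fin r → ℤ) (i l : ℕ) (j k : Fin r)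
    (m m' : Multipartition r) : Prop :=
  ∀ j', betaSet (a j') (m' j') = swapSets e i l j k (fun t => betaSet (a t) (m t)) j'

/-- `λ` lies in a core block: its weight is minimal among the weights of all
multipartitions with the same hub. -/
def MinimalWeight {r : ℕ} (e : ℕ) (a : Fin r → ℤ) (lam : Multipartition r) : Prop :=
  ∀ mu : Multipartition r, SameHub e a lam mu → weight e a lam ≤ weight e a mu

/-- `(b_0,…,b_{e−1})` is a base tuple for `mu` with respect to the multicharge `a'`
(congruent to `a` componentwise mod `e`): each `ℓ^{a'}_{ij}(mu)` is `b i` or `b i + 1`. -/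
def IsBaseTuple {r : ℕ} (e : ℕ) (a : Fin r → ℤ) (mu : Multipartition r)
    (a' : Fin r → ℤ) (b : ℕ → ℤ) : Prop :=
  (∀ j, (e : ℤ) ∣ (a' j - a j)) ∧
    ∀ i < e, ∀ j, level e (a' j) (mu j) i = b i ∨ level e (a' j) (mu j) i = b i + 1

/-- `K_i(C)` for the core block of `mu`: among all base tuples (over all admissible
multicharges), take `b i` maximal and then `b (i−1)` minimal, and set
`K_i = b_i − b_{i−1} − 1` for `i ≠ 0`, `K_0 = b_0 − b_{e−1} − 2`. -/
noncomputable def Kconst {r : ℕ} (e : ℕ) (a : Fin r → ℤ) (mu : Multipartition r)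
    (i : ℕ) : ℤ :=
  let Bi : ℤ := sSup {x : ℤ | ∃ a' bt, IsBaseTuple e a mu a' bt ∧ bt i = x}
  let iprev : ℕ := if i = 0 then e - 1 else i - 1
  let Bp : ℤ := sInf {x : ℤ | ∃ a' bt, IsBaseTuple e a mu a' bt ∧ bt i = Bi ∧ bt iprev = x}
  Bi - Bp - (if i = 0 then 2 else 1)

/-- The map `φ_i : ℤ → ℤ`. -/
def phiMap (e i : ℕ) (x : ℤ) : ℤ :=
  if x % (e : ℤ) = ((i : ℤ) - 1) % e then x + 1
  else if x % (e : ℤ) = (i : ℤ) % e then x - 1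
  else x

/-- Lexicographic order on multipartitions: `λ > μ`. -/
def lexGT {r : ℕ} (lam mu : Multipartition r) : Prop :=
  ∃ j : Fin r, (∀ j' < j, (lam j').part = (mu j').part) ∧
    ∃ i : ℕ, (∀ i' < i, (lam j).part i' = (mu j).part i') ∧
      (mu j).part i < (lam j).part i

/-- `x` is above `y`: `j < j'` or (`j = j'` and `b < b'`). -/
def NodeAbove {r : ℕ} (x y : Node r) : Prop :=
  x.2.2 < y.2.2 ∨ (x.2.2 = y.2.2 ∧ x.1 < y.1)

/-- The order on nodes: `x < y` iff `y` is above `x`. -/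
def NodeLT {r : ℕ} (x y : Node r) : Prop := NodeAbove y x

/-- `N_A(λ)` = (addable `i`-nodes of `λ` below `A`) − (removable `i`-nodes of `λ` below `A`). -/
noncomputable def Nfac {r : ℕ} (e : ℕ) (a : Fin r → ℤ) (lam : Multipartition r)
    (i : ℤ) (A : Node r) : ℤ :=
  (Set.ncard {y : Node r | (lam y.2.2).Addable y.1 y.2.1 ∧
      (a y.2.2 + (y.2.1 : ℤ) - (y.1 : ℤ)) % (e : ℤ) = i % e ∧ NodeAbove A y} : ℤ) -
  (Set.ncard {y : Node r | (lam y.2.2).Removable y.1 y.2.1 ∧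
      (a y.2.2 + (y.2.1 : ℤ) - (y.1 : ℤ)) % (e : ℤ) = i % e ∧ NodeAbove A y} : ℤ)

/-- `lam` is obtained from `mu` by adding one `e`-rim hook to some component:
on β-sets, some `β ∈ B^j` with `β + e ∉ B^j` is replaced by `β + e`. -/
def AddRimHook {r : ℕ} (e : ℕ) (a : Fin r → ℤ) (mu lam : Multipartition r) : Prop :=
  ∃ (j : Fin r) (β : ℤ), β ∈ betaSet (a j) (mu j) ∧ β + (e : ℤ) ∉ betaSet (a j) (mu j) ∧
    betaSet (a j) (lam j) = insert (β + (e : ℤ)) (betaSet (a j) (mu j) \ {β}) ∧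
    ∀ j' ≠ j, betaSet (a j') (lam j') = betaSet (a j') (mu j')

/-- The number of inversions (length) of a permutation of `Fin d`. -/
noncomputable def permLength (d : ℕ) (σ : Equiv.Perm (Fin d)) : ℕ :=
  (Finset.univ.filter (fun p : Fin d × Fin d => p.1 < p.2 ∧ σ p.2 < σ p.1)).card

/-!
A multicore is determined by the integer matrix of its levels `ℓ^a_{ij}`, whose row sums are fixed
by the multicharge. Multicores have the same hub exactly when their level matrices have the same
column sums, and on such a family the weight is an increasing affine function of the energy
`∑ (ℓ^a_{ij})²`; pushing all beads up their runners shows that minimal weight is attained at a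
multicore. The moves `s^{jk}_{il}` add `±1` at the corners of a rectangle and change the energy by
`4 - 2γ^{jk}_{il}`. So as long as some `γ^{jk}_{il}` exceeds `2` there is a move which strictly
decreases the weight, and this first phase must end. In the second phase compare the current
matrix `M` with a matrix `N` of least energy and the same margins. If `M ≠ N`, some rectangle has
sign pattern `+, -, -, ≥ 0` in `N - M`; adjusting `M` towards `N` or `N` towards `M` along it brings
them closer, and one of the two adjustments does not increase the energy of the adjusted matrix.
-/

section Matrices

variable {R C : Type*}

/-- The alternating sum of the four corners of a rectangle in an integer matrix. On the matrix of
abacus levels this is `γ^{jk}_{il}`. -/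
def rectDiff (M : Matrix R C ℤ) (j k : R) (i l : C) : ℤ :=
  M j i - M k i - (M j l - M k l)

lemma rectDiff_sub (M N : Matrix R C ℤ) (j k : R) (i l : C) :
    rectDiff (M - N) j k i l = rectDiff M j k i l - rectDiff N j k i l := by
  simp only [rectDiff, Matrix.sub_apply]
  ring

lemma rectDiff_swap_rows (M : Matrix R C ℤ) (j k : R) (i l : C) :
    rectDiff M k j i l = -rectDiff M j k i l := by
  simp only [rectDiff]
  ring

lemma rectDiff_self_rows (M : Matrix R C ℤ) (j : R) (i l : C) : rectDiff M j j i l = 0 := by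
  simp [rectDiff]

lemma rectDiff_self_cols (M : Matrix R C ℤ) (j k : R) (i : C) : rectDiff M j k i i = 0 := by
  simp [rectDiff]

section Margins

variable [Fintype R] [Fintype C]

/-- The squared Euclidean norm of an integer matrix. On the matrices of abacus levels with given
margins it is, up to affine rescaling, the weight of the multicore. -/
def energy (M : Matrix R C ℤ) : ℤ :=
  ∑ j, ∑ i, M j i ^ 2

/-- Two matrices have the same row sums and the same column sums. -/
def SameMargins (M N : Matrix R C ℤ) : Prop :=
  (∀ j, ∑ i, M j i = ∑ i, N j i) ∧ ∀ i, ∑ j, M j i = ∑ j, N j i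

/-- The matrix has the least energy among all integer matrices with its margins. -/
def IsEnergyMinimal (M : Matrix R C ℤ) : Prop :=
  ∀ M', SameMargins M M' → energy M ≤ energy M'

lemma energy_nonneg (M : Matrix R C ℤ) : 0 ≤ energy M :=
  Finset.sum_nonneg fun _ _ => Finset.sum_nonneg fun _ _ => sq_nonneg _

lemma SameMargins.refl (M : Matrix R C ℤ) : SameMargins M M :=
  ⟨fun _ => rfl, fun _ => rfl⟩

lemma SameMargins.symm {M N : Matrix R C ℤ} (h : SameMargins M N) : SameMargins N M :=
  ⟨fun j => (h.1 j).symm, fun i => (h.2 i).symm⟩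

lemma SameMargins.trans {M N P : Matrix R C ℤ} (h : SameMargins M N) (h' : SameMargins N P) :
    SameMargins M P :=
  ⟨fun j => (h.1 j).trans (h'.1 j), fun i => (h.2 i).trans (h'.2 i)⟩

lemma IsEnergyMinimal.of_energy_le {M N : Matrix R C ℤ} (hM : IsEnergyMinimal M)
    (h : SameMargins M N) (hle : energy N ≤ energy M) : IsEnergyMinimal N :=
  fun M' hM' => hle.trans (hM M' (h.trans hM'))

lemma exists_sameMargins_isEnergyMinimal (M : Matrix R C ℤ) :
    ∃ N, SameMargins M N ∧ IsEnergyMinimal N := by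
  obtain ⟨N, hMN, hN⟩ := exists_minimalFor_of_wellFoundedLT (SameMargins M)
    (fun N => (energy N).toNat) ⟨M, .refl M⟩
  refine ⟨N, hMN, fun N' hN' => ?_⟩
  have hmin : ¬ (energy N').toNat < (energy N).toNat := fun hlt =>
    hlt.not_ge (hN (hMN.trans hN') hlt.le)
  have := energy_nonneg N'
  omega

-- Take a nonzero row `j` with as many negative entries as possible. If row `k` were negative
-- wherever row `j` is, it would have strictly more negative entries, the extra one in column `i`.
lemma exists_square_of_sums_eq_zero {D : Matrix R C ℤ} (hD : D ≠ 0)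
    (hrow : ∀ j, ∑ i, D j i = 0) (hcol : ∀ i, ∑ j, D j i = 0) :
    ∃ j k i l, 0 < D j i ∧ D j l < 0 ∧ D k i < 0 ∧ 0 ≤ D k l := by
  obtain ⟨j₀, i₀, h₀⟩ : ∃ j i, D j i ≠ 0 := by
    by_contra! h
    exact hD (Matrix.ext h)
  let negCols (j : R) : Finset C := {l | D j l < 0}
  obtain ⟨j, ⟨l₀, hl₀⟩, hmax⟩ := exists_maximalFor_of_wellFoundedGT
    (fun j => ∃ i, D j i ≠ 0) negCols ⟨j₀, i₀, h₀⟩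
  obtain ⟨i, -, hi⟩ := Finset.exists_pos_of_sum_zero_of_exists_nonzero _ (hrow j)
    ⟨l₀, Finset.mem_univ _, hl₀⟩
  obtain ⟨k, hk⟩ : ∃ k, D k i < 0 := by
    by_contra! h
    exact hi.ne' ((Finset.sum_eq_zero_iff_of_nonneg fun k _ => h k).1 (hcol i) j
      (Finset.mem_univ _))
  by_contra! hno
  have hsub : negCols j ⊆ negCols k := fun l hl => by
    simp only [negCols, Finset.mem_filter_univ] at hl ⊢
    exact hno j k i l hi hl hk
  have hik : i ∈ negCols j := hmax ⟨i, hk.ne⟩ hsub (by simpa [negCols] using hk)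
  simp only [negCols, Finset.mem_filter_univ] at hik
  exact hi.not_gt hik

end Margins

variable [DecidableEq R] [DecidableEq C]

/-- The matrix with entries `1` at `(j, i)`, `(k, l)` and `-1` at `(j, l)`, `(k, i)`. -/
def squareMatrix (j k : R) (i l : C) : Matrix R C ℤ :=
  Matrix.vecMulVec (Pi.single j 1 - Pi.single k 1) (Pi.single i 1 - Pi.single l 1)

/-- The effect of `s^{jk}_{il}` on the matrix of abacus levels: one unit moves from column `i` to
column `l` in row `j`, and back in row `k`. -/
def squareMove (M : Matrix R C ℤ) (j k : R) (i l : C) : Matrix R C ℤ :=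
  M - squareMatrix j k i l

lemma squareMove_swap_rows (M : Matrix R C ℤ) (j k : R) (i l : C) :
    squareMove M k j i l = M + squareMatrix j k i l := by
  rw [squareMove, squareMatrix, squareMatrix, ← neg_sub (Pi.single j _), Matrix.neg_vecMulVec,
    sub_neg_eq_add]

lemma rectDiff_squareMatrix {j k : R} {i l : C} (hjk : j ≠ k) (hil : i ≠ l) :
    rectDiff (squareMatrix j k i l) j k i l = 4 := by
  simp [rectDiff, squareMatrix, Matrix.vecMulVec_apply, hjk, hjk.symm, hil, hil.symm]

variable [Fintype R] [Fintype C]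

lemma sameMargins_squareMove (M : Matrix R C ℤ) (j k : R) (i l : C) :
    SameMargins M (squareMove M j k i l) := by
  constructor <;> intro p <;>
    simp [squareMove, squareMatrix, Matrix.vecMulVec_apply, ← Finset.mul_sum, ← Finset.sum_mul]

lemma sum_mul_squareMatrix (M : Matrix R C ℤ) (j k : R) (i l : C) :
    ∑ p, ∑ q, M p q * squareMatrix j k i l p q = rectDiff M j k i l := by
  have hrow (u : R → ℤ) (v : C → ℤ) :
      ∑ p, ∑ q, M p q * (u p * v q) = ∑ p, u p * ∑ q, M p q * v q := by
    refine Finset.sum_congr rfl fun p _ => ?_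
    rw [Finset.mul_sum]
    exact Finset.sum_congr rfl fun q _ => mul_left_comm _ _ _
  simp only [squareMatrix, Matrix.vecMulVec_apply, hrow]
  simp [sub_mul, mul_sub, Pi.single_apply, rectDiff]

lemma energy_squareMove (M : Matrix R C ℤ) {j k : R} {i l : C} (hjk : j ≠ k) (hil : i ≠ l) :
    energy (squareMove M j k i l) = energy M - 2 * rectDiff M j k i l + 4 := by
  rw [← rectDiff_squareMatrix hjk hil, ← sum_mul_squareMatrix M, ← sum_mul_squareMatrix]
  simp only [energy, squareMove, Finset.mul_sum, ← Finset.sum_sub_distrib,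
    ← Finset.sum_add_distrib]
  refine Finset.sum_congr rfl fun p _ => Finset.sum_congr rfl fun q _ => ?_
  rw [Matrix.sub_apply]
  ring

/-- `M'` arises from `M` by a nontrivial square move, with `rel (energy M') (energy M)`. -/
def SquareStep (rel : ℤ → ℤ → Prop) (M M' : Matrix R C ℤ) : Prop :=
  ∃ (j k : R) (i l : C), j ≠ k ∧ i ≠ l ∧ M' = squareMove M j k i l ∧ rel (energy M') (energy M)

theorem exists_reflTransGen_abs_rectDiff_le_two (M : Matrix R C ℤ) :
    ∃ M', Relation.ReflTransGen (SquareStep (· < ·)) M M' ∧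
      ∀ j k i l, |rectDiff M' j k i l| ≤ 2 := by
  induction hn : (energy M).toNat using Nat.strong_induction_on generalizing M with
  | _ n ih =>
  by_cases hM : ∀ j k i l, rectDiff M j k i l ≤ 2
  · refine ⟨M, .refl, fun j k i l => abs_le.2 ⟨?_, hM j k i l⟩⟩
    linarith [hM k j i l, rectDiff_swap_rows M j k i l]
  · push Not at hM
    obtain ⟨j, k, i, l, hrect⟩ := hM
    have hjk : j ≠ k := by
      rintro rfl
      simp [rectDiff_self_rows] at hrect
    have hil : i ≠ l := by
      rintro rfl
      simp [rectDiff_self_cols] at hrect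
    have hlt : energy (squareMove M j k i l) < energy M := by
      rw [energy_squareMove M hjk hil]
      linarith
    have hnonneg := energy_nonneg (squareMove M j k i l)
    obtain ⟨M', hM', hbound⟩ := ih _ (by omega) (squareMove M j k i l) rfl
    exact ⟨M', .head ⟨j, k, i, l, hjk, hil, rfl, hlt⟩ hM', hbound⟩

lemma exists_squareMove_energy_sub_lt {M N : Matrix R C ℤ} (h : SameMargins M N) (hne : M ≠ N) :
    ∃ j k i l, j ≠ k ∧ i ≠ l ∧ 3 ≤ rectDiff N j k i l - rectDiff M j k i l ∧
      energy (squareMove (N - M) j k i l) < energy (N - M) := by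
  obtain ⟨j, k, i, l, hji, hjl, hki, hkl⟩ := exists_square_of_sums_eq_zero (sub_ne_zero.2 hne.symm)
    (fun j => by simp [h.1 j]) (fun i => by simp [h.2 i])
  have hjk : j ≠ k := by
    rintro rfl
    exact hji.not_gt hki
  have hil : i ≠ l := by
    rintro rfl
    exact hji.not_gt hjl
  have hrect : 3 ≤ rectDiff (N - M) j k i l := by
    rw [rectDiff]
    omega
  refine ⟨j, k, i, l, hjk, hil, rectDiff_sub N M j k i l ▸ hrect, ?_⟩
  rw [energy_squareMove _ hjk hil]
  omega

-- A square which brings `M` and `N` closer to each other can be moved in `N` without increasing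
-- its energy, or else in `M`: the two energy changes are even and add up to at most `2`.
lemma IsEnergyMinimal.exists_reflTransGen {M N : Matrix R C ℤ} (hN : IsEnergyMinimal N)
    (h : SameMargins M N) :
    ∃ M', Relation.ReflTransGen (SquareStep (· ≤ ·)) M M' ∧ IsEnergyMinimal M' := by
  induction hn : (energy (N - M)).toNat using Nat.strong_induction_on generalizing M N with
  | _ n ih =>
  by_cases hne : M = N
  · exact ⟨N, hne ▸ .refl, hN⟩
  obtain ⟨j, k, i, l, hjk, hil, hrect, hlt⟩ := exists_squareMove_energy_sub_lt h hne
  have hnonneg := energy_nonneg (squareMove (N - M) j k i l)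
  have hmarg := sameMargins_squareMove N j k i l
  have henergy := energy_squareMove N hjk hil
  by_cases hle : energy (squareMove N j k i l) ≤ energy N
  · refine ih _ ?_ (hN.of_energy_le hmarg hle) (h.trans hmarg) rfl
    rw [squareMove, sub_right_comm, ← squareMove]
    omega
  · have hstep : SquareStep (· ≤ ·) M (squareMove M k j i l) := by
      refine ⟨k, j, i, l, hjk.symm, hil, rfl, ?_⟩
      rw [energy_squareMove M hjk.symm hil, rectDiff_swap_rows]
      omega
    have hcloser : (energy (N - squareMove M k j i l)).toNat < n := by
      rw [squareMove_swap_rows, ← sub_sub, ← squareMove]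
      omega
    obtain ⟨M', hM', hmin⟩ :=
      ih _ hcloser hN ((sameMargins_squareMove M k j i l).symm.trans h) rfl
    exact ⟨M', .head hstep hM', hmin⟩

theorem exists_reflTransGen_isEnergyMinimal (M : Matrix R C ℤ) :
    ∃ M', Relation.ReflTransGen (SquareStep (· ≤ ·)) M M' ∧ IsEnergyMinimal M' :=
  have ⟨_, hMN, hN⟩ := exists_sameMargins_isEnergyMinimal M
  hN.exists_reflTransGen hMN

end Matrices

section Beads

/-- The element of the β-set contributed by row `b`. -/
def PartitionFun.beta (a : ℤ) (lam : PartitionFun) (b : ℕ) : ℤ :=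
  lam.part b + a - (b + 1)

/-- The partition has at most `N` nonzero parts. -/
def PartitionFun.LengthLE (lam : PartitionFun) (N : ℕ) : Prop :=
  ∀ b, N ≤ b → lam.part b = 0

variable {a : ℤ} {lam : PartitionFun} {N : ℕ}

lemma PartitionFun.LengthLE.mono {N' : ℕ} (h : lam.LengthLE N) (hN : N ≤ N') : lam.LengthLE N' :=
  fun b hb => h b (hN.trans hb)

lemma PartitionFun.LengthLE.beta_eq (h : lam.LengthLE N) {b : ℕ} (hb : N ≤ b) :
    lam.beta a b = a - b - 1 := by
  rw [beta, h b hb]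
  push_cast
  ring

lemma PartitionFun.beta_strictAnti (a : ℤ) (lam : PartitionFun) : StrictAnti (lam.beta a) := by
  refine strictAnti_nat_of_succ_lt fun b => ?_
  have := lam.antitone (Nat.le_add_right b 1)
  simp only [beta]
  omega

lemma betaSet_eq_range (a : ℤ) (lam : PartitionFun) : betaSet a lam = Set.range (lam.beta a) := by
  simp only [betaSet, Set.range, PartitionFun.beta, eq_comm]

/-- The `N` largest elements of the β-set. -/
def PartitionFun.beads (a : ℤ) (lam : PartitionFun) (N : ℕ) : Finset ℤ :=
  (Finset.range N).map ⟨lam.beta a, (lam.beta_strictAnti a).injective⟩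

lemma PartitionFun.sum_beads {A : Type*} [AddCommMonoid A] (f : ℤ → A) :
    ∑ x ∈ lam.beads a N, f x = ∑ b ∈ Finset.range N, f (lam.beta a b) :=
  Finset.sum_map ..

lemma PartitionFun.card_beads (a : ℤ) (lam : PartitionFun) (N : ℕ) : (lam.beads a N).card = N := by
  rw [beads, Finset.card_map, Finset.card_range]

lemma PartitionFun.LengthLE.mem_betaSet (h : lam.LengthLE N) {x : ℤ} :
    x ∈ betaSet a lam ↔ x ∈ lam.beads a N ∨ x < a - N := by
  simp only [betaSet_eq_range, Set.mem_range, beads, Finset.mem_map, Finset.mem_range,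
    Function.Embedding.coeFn_mk]
  constructor
  · rintro ⟨b, rfl⟩
    rcases lt_or_ge b N with hb | hb
    · exact .inl ⟨b, hb, rfl⟩
    · right
      rw [h.beta_eq hb]
      omega
  · rintro (⟨b, -, hb⟩ | hx)
    · exact ⟨b, hb⟩
    · refine ⟨(a - 1 - x).toNat, ?_⟩
      rw [h.beta_eq (by omega)]
      omega

lemma PartitionFun.sub_le_of_mem_beads {x : ℤ} (hx : x ∈ lam.beads a N) : a - N ≤ x := by
  simp only [beads, Finset.mem_map, Finset.mem_range, Function.Embedding.coeFn_mk] at hx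
  obtain ⟨b, hb, rfl⟩ := hx
  simp only [beta]
  omega

lemma exists_beta_eq {β : ℕ → ℤ} (hβ : StrictAnti β) (htail : ∀ b, N ≤ b → β b = a - b - 1) :
    ∃ lam : PartitionFun, lam.LengthLE N ∧ ∀ b, lam.beta a b = β b := by
  have hanti : Antitone fun b : ℕ => β b + b := antitone_nat_of_succ_le fun b => by
    have := hβ (Nat.lt_add_one b)
    push_cast
    omega
  have hnonneg (b : ℕ) : 0 ≤ β b - a + b + 1 := by
    have := hanti (Nat.le_add_right b N)
    simp only [htail (b + N) (Nat.le_add_left N b)] at this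
    omega
  have hzero (b : ℕ) (hb : N ≤ b) : (β b - a + b + 1).toNat = 0 := by
    rw [htail b hb]
    omega
  refine ⟨⟨fun b => (β b - a + b + 1).toNat, fun b b' hbb' => ?_, N, hzero⟩, hzero, fun b => ?_⟩
  · have := hanti hbb'
    dsimp only at this ⊢
    omega
  · rw [PartitionFun.beta, Int.toNat_of_nonneg (hnonneg b)]
    ring

lemma exists_beads_eq {X : Finset ℤ} (hcard : X.card = N) (hX : ∀ x ∈ X, a - N ≤ x) :
    ∃ lam : PartitionFun, lam.LengthLE N ∧ lam.beads a N = X := by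
  let β (b : ℕ) : ℤ :=
    if hb : b < N then X.orderEmbOfFin hcard (Fin.rev ⟨b, hb⟩) else a - b - 1
  have hβX (b : ℕ) (hb : b < N) : β b ∈ X := by
    simp only [β, dif_pos hb, Finset.orderEmbOfFin_mem]
  have hβ : StrictAnti β := fun b b' hbb' => by
    by_cases hb' : b' < N
    · simp only [β, dif_pos hb', dif_pos (hbb'.trans hb')]
      exact (X.orderEmbOfFin hcard).strictMono (Fin.rev_lt_rev.2 hbb')
    · have hlt : β b' < a - N := by
        simp only [β, dif_neg hb']
        omega
      by_cases hb : b < N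
      · exact hlt.trans_le (hX _ (hβX b hb))
      · simp only [β, dif_neg hb, dif_neg hb']
        omega
  obtain ⟨lam, hlen, hlam⟩ := exists_beta_eq hβ fun b hb => dif_neg hb.not_gt
  refine ⟨lam, hlen, Finset.eq_of_subset_of_card_le (fun x hx => ?_) ?_⟩
  · simp only [PartitionFun.beads, Finset.mem_map, Finset.mem_range,
      Function.Embedding.coeFn_mk] at hx
    obtain ⟨b, hb, rfl⟩ := hx
    exact hlam b ▸ hβX b hb
  · rw [hcard, PartitionFun.card_beads]

end Beads

section Residues

variable {e : ℕ}

/-- The number of elements of `X` lying on runner `i` of the `e`-runner abacus. -/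
def runnerCount (e : ℕ) (X : Finset ℤ) (i : ℤ) : ℤ :=
  ∑ x ∈ X, if x ≡ i [ZMOD e] then 1 else 0

/-- The sum of the levels of the elements of `X` on the `e`-runner abacus whose first runner is
runner `i`. -/
def levelSum (e : ℕ) (X : Finset ℤ) (i : ℤ) : ℤ :=
  ∑ x ∈ X, (x - i) / e

variable {r : ℕ} {a : Fin r → ℤ} {lam mu : Multipartition r} {N : Fin r → ℕ}

lemma nodeCount_eq_sum_card (hlam : ∀ j, (lam j).LengthLE (N j)) (i : ℤ) :
    nodeCount e a lam i = ∑ j, ∑ b ∈ Finset.range (N j),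
      ((Finset.range ((lam j).part b)).filter fun c : ℕ => a j + c - b ≡ i [ZMOD e]).card := by
  let rows : Finset (Σ _ : Fin r, Σ _ : ℕ, ℕ) := Finset.univ.sigma fun j =>
    (Finset.range (N j)).sigma fun b =>
      (Finset.range ((lam j).part b)).filter fun c : ℕ => a j + c - b ≡ i [ZMOD e]
  let toNode (x : Σ _ : Fin r, Σ _ : ℕ, ℕ) : Node r := (x.2.1, x.2.2, x.1)
  have hinj : Function.Injective toNode := by
    rintro ⟨j, b, c⟩ ⟨j', b', c'⟩ h
    simp only [toNode, Prod.mk.injEq] at h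
    obtain ⟨rfl, rfl, rfl⟩ := h
    rfl
  have hset : {x : Node r | (lam x.2.2).InDiag x.1 x.2.1 ∧
      (a x.2.2 + (x.2.1 : ℤ) - (x.1 : ℤ)) % (e : ℤ) = i % e} = rows.image toNode := by
    ext ⟨b, c, j⟩
    have hrow (hc : c < (lam j).part b) : b < N j := by
      by_contra hb
      simp [hlam j b (not_lt.1 hb)] at hc
    simp only [Set.mem_ofPred_eq, PartitionFun.InDiag, Finset.coe_image, Set.mem_image,
      Finset.mem_coe, rows, toNode, Finset.mem_sigma, Finset.mem_univ, Finset.mem_filter,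
      Finset.mem_range, Prod.mk.injEq, true_and]
    constructor
    · rintro ⟨hc, hres⟩
      exact ⟨⟨j, b, c⟩, ⟨hrow hc, hc, hres⟩, rfl, rfl, rfl⟩
    · rintro ⟨⟨j, b, c⟩, ⟨-, hc, hres⟩, rfl, rfl, rfl⟩
      exact ⟨hc, hres⟩
  rw [nodeCount, hset, Set.ncard_coe_finset, Finset.card_image_of_injective _ hinj]
  simp only [rows, Finset.card_sigma]

lemma removableCount_eq_card (i : ℤ) {j : Fin r} {n : ℕ} (hlam : (lam j).LengthLE n) :
    removableCount e a lam i j = ((Finset.range n).filter fun b =>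
      (lam j).part (b + 1) < (lam j).part b ∧ (lam j).beta (a j) b ≡ i [ZMOD e]).card := by
  have hset : {p : ℕ × ℕ | (lam j).Removable p.1 p.2 ∧
      (a j + (p.2 : ℤ) - (p.1 : ℤ)) % (e : ℤ) = i % e} =
      ((Finset.range n).filter fun b => (lam j).part (b + 1) < (lam j).part b ∧
        (lam j).beta (a j) b ≡ i [ZMOD e]).image fun b => (b, (lam j).part b - 1) := by
    ext ⟨b, c⟩
    have hrow (hc : (lam j).part b = c + 1) : b < n := by
      by_contra hb
      simp [hlam b (not_lt.1 hb)] at hc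
    have hres (hc : (lam j).part b = c + 1) : (lam j).beta (a j) b = a j + c - b := by
      rw [PartitionFun.beta, hc]
      push_cast
      ring
    simp only [PartitionFun.Removable, Set.mem_ofPred_eq, Finset.mem_coe, Finset.mem_image,
      Finset.mem_filter, Finset.mem_range, Prod.mk.injEq]
    constructor
    · rintro ⟨⟨hc, hlt⟩, h⟩
      exact ⟨b, ⟨hrow hc, by omega, hres hc ▸ h⟩, rfl, by omega⟩
    · rintro ⟨b, ⟨-, hlt, h⟩, rfl, hc⟩
      have hc : (lam j).part b = c + 1 := by omega
      exact ⟨⟨hc, by omega⟩, hres hc ▸ h⟩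
  rw [removableCount, hset, Set.ncard_coe_finset, Finset.card_image_of_injective]
  exact fun _ _ h => congrArg Prod.fst h

lemma addableCount_eq_card (i : ℤ) {j : Fin r} {n : ℕ} (hlam : (lam j).LengthLE n) :
    addableCount e a lam i j = ((Finset.range (n + 1)).filter fun b =>
      (b = 0 ∨ (lam j).part b < (lam j).part (b - 1)) ∧
        (lam j).beta (a j) b + 1 ≡ i [ZMOD e]).card := by
  have hset : {p : ℕ × ℕ | (lam j).Addable p.1 p.2 ∧
      (a j + (p.2 : ℤ) - (p.1 : ℤ)) % (e : ℤ) = i % e} =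
      ((Finset.range (n + 1)).filter fun b => (b = 0 ∨ (lam j).part b < (lam j).part (b - 1)) ∧
        (lam j).beta (a j) b + 1 ≡ i [ZMOD e]).image fun b => (b, (lam j).part b) := by
    ext ⟨b, c⟩
    have hrow (hb : b = 0 ∨ (lam j).part b < (lam j).part (b - 1)) : b < n + 1 := by
      by_contra hbn
      rw [hlam (b - 1) (by omega)] at hb
      omega
    have hres (hc : (lam j).part b = c) : (lam j).beta (a j) b + 1 = a j + c - b := by
      rw [PartitionFun.beta, hc]
      ring
    simp only [PartitionFun.Addable, Set.mem_ofPred_eq, Finset.mem_coe, Finset.mem_image,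
      Finset.mem_filter, Finset.mem_range, Prod.mk.injEq]
    constructor
    · rintro ⟨⟨hc, hb⟩, h⟩
      exact ⟨b, ⟨hrow hb, hb, hres hc ▸ h⟩, rfl, hc⟩
    · rintro ⟨b, ⟨-, hb, h⟩, rfl, hc⟩
      exact ⟨⟨hc, hb⟩, hres hc ▸ h⟩
  rw [addableCount, hset, Set.ncard_coe_finset, Finset.card_image_of_injective]
  exact fun _ _ h => congrArg Prod.fst h

lemma runnerCount_beads_sub_one (i : ℤ) {lam : PartitionFun} {a : ℤ} {n : ℕ}
    (hlam : lam.LengthLE n) :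
    runnerCount e (lam.beads a n) (i - 1) =
      ∑ b ∈ Finset.range n, (if lam.beta a (b + 1) + 1 ≡ i [ZMOD e] then 1 else 0) +
        (if lam.beta a 0 + 1 ≡ i [ZMOD e] then 1 else 0) -
          (if a - n ≡ i [ZMOD e] then 1 else 0) := by
  have hshift (x : ℤ) : x ≡ i - 1 [ZMOD e] ↔ x + 1 ≡ i [ZMOD e] :=
    ⟨fun h => by simpa using h.add_right 1, fun h => by simpa using h.sub_right 1⟩
  rw [runnerCount, PartitionFun.sum_beads,
    ← Finset.sum_range_succ' fun b => if lam.beta a b + 1 ≡ i [ZMOD e] then (1 : ℤ) else 0,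
    Finset.sum_range_succ, hlam.beta_eq le_rfl, sub_add_cancel]
  simp only [hshift, add_sub_cancel_right]

-- Rows `b` and `b + 1` of equal length have no removable, respectively addable, node, and the
-- residues that such nodes would have are equal.
lemma delta_eq_runnerCount_sub (i : ℤ) {j : Fin r} {n : ℕ} (hlam : (lam j).LengthLE n) :
    delta e a lam i j = runnerCount e ((lam j).beads (a j) n) i -
      runnerCount e ((lam j).beads (a j) n) (i - 1) -
        (if a j - n ≡ i [ZMOD e] then 1 else 0) := by
  have hrow (b : ℕ) :
      ((if (lam j).part (b + 1) < (lam j).part b ∧ (lam j).beta (a j) b ≡ i [ZMOD e]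
        then 1 else 0) - (if (lam j).part (b + 1) < (lam j).part b ∧
          (lam j).beta (a j) (b + 1) + 1 ≡ i [ZMOD e] then 1 else 0) : ℤ) =
      (if (lam j).beta (a j) b ≡ i [ZMOD e] then 1 else 0) -
        (if (lam j).beta (a j) (b + 1) + 1 ≡ i [ZMOD e] then 1 else 0) := by
    by_cases hlt : (lam j).part (b + 1) < (lam j).part b
    · simp only [hlt, true_and]
    · have heq : (lam j).part (b + 1) = (lam j).part b :=
        ((lam j).antitone (Nat.le_add_right b 1)).antisymm (not_lt.1 hlt)
      have hbeta : (lam j).beta (a j) (b + 1) + 1 = (lam j).beta (a j) b := by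
        rw [PartitionFun.beta, PartitionFun.beta, heq]
        push_cast
        ring
      simp only [hlt, false_and, if_false, hbeta, sub_self]
  rw [delta, removableCount_eq_card i hlam, addableCount_eq_card i hlam,
    runnerCount_beads_sub_one i hlam, runnerCount, PartitionFun.sum_beads]
  simp only [Finset.card_filter, Finset.sum_range_succ' _ n, Nat.add_eq_zero_iff, one_ne_zero,
    and_false, false_or, Nat.add_sub_cancel, true_or, true_and, Nat.cast_add, Nat.cast_sum,
    Nat.cast_ite, Nat.cast_one, Nat.cast_zero]
  have hsum := Finset.sum_congr (s₁ := Finset.range n) rfl fun b _ => hrow b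
  simp only [Finset.sum_sub_distrib] at hsum
  linarith

/-- The total number of beads on runner `i` in the `r` displays truncated to `N j` beads. -/
def totalRunnerCount (e : ℕ) (a : Fin r → ℤ) (N : Fin r → ℕ) (lam : Multipartition r) (i : ℤ) :
    ℤ :=
  ∑ j, runnerCount e ((lam j).beads (a j) (N j)) i

/-- The total of the levels of the beads in the `r` displays truncated to `N j` beads. -/
def totalLevelSum (e : ℕ) (a : Fin r → ℤ) (N : Fin r → ℕ) (lam : Multipartition r) (i : ℤ) : ℤ :=
  ∑ j, levelSum e ((lam j).beads (a j) (N j)) i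

lemma hub_eq_totalRunnerCount_sub (hlam : ∀ j, (lam j).LengthLE (N j)) (i : ℤ) :
    hub e a lam i = totalRunnerCount e a N lam i - totalRunnerCount e a N lam (i - 1) -
      ∑ j, if a j - N j ≡ i [ZMOD e] then 1 else 0 := by
  simp only [hub, totalRunnerCount, ← Finset.sum_sub_distrib]
  exact Finset.sum_congr rfl fun j _ => delta_eq_runnerCount_sub i (hlam j)

lemma mul_add_modEq_iff {t : ℤ} {i i' : Fin e} : t * e + i ≡ i' [ZMOD e] ↔ i = i' := by
  rw [Int.ModEq, add_comm, Int.add_mul_emod_self_right, Int.emod_eq_of_lt (by omega) (by omega),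
    Int.emod_eq_of_lt (by omega) (by omega), Nat.cast_inj, Fin.val_inj]

variable [NeZero e]

lemma sub_ediv_sub_sub_one_ediv (x i : ℤ) :
    (x - i) / e - (x - (i + 1)) / e = if x ≡ i [ZMOD e] then 1 else 0 := by
  have he : (0 : ℤ) < e := by exact_mod_cast Nat.pos_of_neZero e
  simp only [Int.modEq_comm (a := x), Int.modEq_iff_dvd, ← sub_sub]
  generalize x - i = z
  have hdiv := Int.mul_ediv_add_emod z e
  have hnonneg := Int.emod_nonneg z he.ne'
  have hlt := Int.emod_lt_of_pos z he
  split_ifs with h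
  · rw [Int.emod_eq_zero_of_dvd h] at hdiv
    rw [((Int.ediv_emod_unique (a := z - 1) (q := z / e - 1) (r := e - 1) he).2
      ⟨by linarith, by omega, by omega⟩).1]
    ring
  · have hpos : z % e ≠ 0 := mt Int.dvd_of_emod_eq_zero h
    rw [((Int.ediv_emod_unique (a := z - 1) (q := z / e) (r := z % e - 1) he).2
      ⟨by linarith, by omega, by omega⟩).1]
    ring

lemma levelSum_sub_levelSum_add_one (X : Finset ℤ) (i : ℤ) :
    levelSum e X i - levelSum e X (i + 1) = runnerCount e X i := by
  simp only [levelSum, runnerCount, ← Finset.sum_sub_distrib, sub_ediv_sub_sub_one_ediv]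

lemma card_row_residue (a i : ℤ) (b p : ℕ) :
    (((Finset.range p).filter fun c : ℕ => a + c - b ≡ i [ZMOD e]).card : ℤ) =
      (p + a - (b + 1) - i) / e - (a - b - 1 - i) / e := by
  induction p with
  | zero => simp [sub_sub]
  | succ p ih =>
    have hstep := sub_ediv_sub_sub_one_ediv (e := e) (a + p - b) i
    rw [Finset.range_add_one, Finset.filter_insert, apply_ite Finset.card,
      Finset.card_insert_of_notMem (by simp), Nat.cast_ite, Nat.cast_succ, ih]
    rw [show ((p + 1 : ℕ) : ℤ) + a - (b + 1) - i = a + p - b - i by push_cast; ring,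
      show (p : ℤ) + a - (b + 1) - i = a + p - b - (i + 1) by ring]
    split_ifs at hstep ⊢ <;> linarith

-- Row `b` contributes one node for each element between its position `a - b - 1` in the β-set of
-- the empty partition and its actual position.
lemma nodeCount_eq_sum_levelSum (hlam : ∀ j, (lam j).LengthLE (N j)) (i : ℤ) :
    (nodeCount e a lam i : ℤ) = totalLevelSum e a N lam i -
      ∑ j, ∑ b ∈ Finset.range (N j), (a j - b - 1 - i) / e := by
  rw [nodeCount_eq_sum_card hlam, totalLevelSum, ← Finset.sum_sub_distrib]
  push_cast
  refine Finset.sum_congr rfl fun j _ => ?_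
  rw [levelSum, PartitionFun.sum_beads, ← Finset.sum_sub_distrib]
  exact Finset.sum_congr rfl fun b _ => card_row_residue ..

lemma mul_add_eq_iff {t t' : ℤ} {i i' : Fin e} : t * e + i = t' * e + i' ↔ t = t' ∧ i = i' :=
  (Int.divModEquiv e).symm.injective.eq_iff.trans Prod.mk_inj

lemma exists_mul_add_eq (e : ℕ) [NeZero e] (x : ℤ) : ∃ (t : ℤ) (i : Fin e), t * e + i = x :=
  ⟨_, _, (Int.divModEquiv e).symm_apply_apply x⟩

lemma mul_add_ediv (t : ℤ) (i : Fin e) : (t * e + i) / e = t :=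
  congrArg Prod.fst ((Int.divModEquiv e).apply_symm_apply (t, i))

/-- The levels of the elements of `X` on runner `i` of the `e`-runner abacus. -/
noncomputable def runner (X : Finset ℤ) (i : Fin e) : Finset ℤ :=
  X.preimage (fun t : ℤ => t * e + i) fun _ _ _ _ h => (mul_add_eq_iff.1 h).1

lemma mem_runner {X : Finset ℤ} {t : ℤ} {i : Fin e} : t ∈ runner X i ↔ t * e + i ∈ X :=
  Finset.mem_preimage

lemma sum_eq_sum_runner (e : ℕ) [NeZero e] (X : Finset ℤ) (f : ℤ → ℤ) :
    ∑ x ∈ X, f x = ∑ i : Fin e, ∑ t ∈ runner X i, f (t * e + i) := by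
  rw [Finset.sum_sigma']
  refine (Finset.sum_nbij (fun y : (_ : Fin e) × ℤ => y.2 * e + y.1) ?_ ?_ ?_ fun _ _ => rfl).symm
  · simp [mem_runner]
  · rintro ⟨i, t⟩ - ⟨i', t'⟩ - h
    obtain ⟨rfl, rfl⟩ := mul_add_eq_iff.1 h
    rfl
  · intro x hx
    obtain ⟨t, i, rfl⟩ := exists_mul_add_eq e x
    exact ⟨⟨i, t⟩, by simpa [mem_runner] using hx, rfl⟩

lemma runnerCount_eq_card_runner (X : Finset ℤ) (i : Fin e) :
    runnerCount e X i = (runner X i).card := by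
  rw [runnerCount, sum_eq_sum_runner e X]
  simp only [mul_add_modEq_iff]
  simp

lemma sum_runnerCount (e : ℕ) [NeZero e] (X : Finset ℤ) :
    ∑ i : Fin e, runnerCount e X i = X.card := by
  simpa [runnerCount_eq_card_runner] using (sum_eq_sum_runner e X fun _ => 1).symm

lemma levelSum_zero_eq_sum_runner (e : ℕ) [NeZero e] (X : Finset ℤ) :
    levelSum e X 0 = ∑ i : Fin e, ∑ t ∈ runner X i, t := by
  simp only [levelSum, sub_zero, sum_eq_sum_runner e X, mul_add_ediv]

lemma sum_totalRunnerCount (lam : Multipartition r) :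
    ∑ i : Fin e, totalRunnerCount e a N lam i = ∑ j, (N j : ℤ) := by
  simp only [totalRunnerCount]
  rw [Finset.sum_comm]
  simp only [sum_runnerCount, PartitionFun.card_beads]

-- The hub determines the runner counts up to a common additive constant, and the total number of
-- beads determines that constant.
lemma SameHub.totalRunnerCount_eq (h : SameHub e a lam mu) (hlam : ∀ j, (lam j).LengthLE (N j))
    (hmu : ∀ j, (mu j).LengthLE (N j)) (i : ℤ) :
    totalRunnerCount e a N lam i = totalRunnerCount e a N mu i := by
  let d (i : ℤ) : ℤ := totalRunnerCount e a N lam i - totalRunnerCount e a N mu i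
  have hperiodic : Function.Periodic d 1 := fun i => by
    have := h (i + 1)
    rw [hub_eq_totalRunnerCount_sub hlam, hub_eq_totalRunnerCount_sub hmu,
      add_sub_cancel_right] at this
    simp only [d]
    linarith
  have hconst (i : ℤ) : d i = d 0 := by simpa using hperiodic.int_mul_eq i
  have hsum : ∑ i : Fin e, d i = 0 := by
    simp only [d, Finset.sum_sub_distrib, sum_totalRunnerCount, sub_self]
  simp only [hconst, Finset.sum_const, Finset.card_univ, Fintype.card_fin, smul_eq_zero,
    NeZero.ne e, false_or] at hsum
  exact sub_eq_zero.1 ((hconst i).trans hsum)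

lemma sameHub_of_totalRunnerCount_eq (hlam : ∀ j, (lam j).LengthLE (N j))
    (hmu : ∀ j, (mu j).LengthLE (N j))
    (h : ∀ i : Fin e, totalRunnerCount e a N lam i = totalRunnerCount e a N mu i) :
    SameHub e a lam mu := by
  have hall (x : ℤ) : totalRunnerCount e a N lam x = totalRunnerCount e a N mu x := by
    obtain ⟨t, i, rfl⟩ := exists_mul_add_eq e x
    have hmod (y : ℤ) : y ≡ t * e + i [ZMOD e] ↔ y ≡ i [ZMOD e] := by
      rw [Int.ModEq, Int.ModEq, add_comm, Int.add_mul_emod_self_right]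
    simpa only [totalRunnerCount, runnerCount, hmod] using h i
  intro i
  rw [hub_eq_totalRunnerCount_sub hlam, hub_eq_totalRunnerCount_sub hmu, hall, hall]

-- Equal hubs make the numbers of `i`-nodes differ by a constant independent of `i`, which changes
-- only the linear part of the weight.
lemma SameHub.weight_sub_weight (h : SameHub e a lam mu) (hlam : ∀ j, (lam j).LengthLE (N j))
    (hmu : ∀ j, (mu j).LengthLE (N j)) :
    weight e a lam - weight e a mu =
      r * ((totalLevelSum e a N lam 0 - totalLevelSum e a N mu 0 : ℤ) : ℚ) := by
  let d (i : ℤ) : ℤ := totalLevelSum e a N lam i - totalLevelSum e a N mu i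
  have hperiodic : Function.Periodic d 1 := fun i => by
    have hstep := h.totalRunnerCount_eq hlam hmu i
    simp only [totalRunnerCount, ← levelSum_sub_levelSum_add_one, Finset.sum_sub_distrib] at hstep
    simp only [d, totalLevelSum]
    linarith
  have hconst (i : ℤ) : d i = d 0 := by simpa using hperiodic.int_mul_eq i
  have hcount (i : ℤ) : (nodeCount e a lam i : ℚ) = nodeCount e a mu i + (d 0 : ℚ) := by
    have hint : (nodeCount e a lam i : ℤ) = nodeCount e a mu i + d i := by
      rw [nodeCount_eq_sum_levelSum hlam, nodeCount_eq_sum_levelSum hmu]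
      ring
    rw [← hconst i]
    exact_mod_cast hint
  simp only [weight, hcount, Finset.sum_add_distrib, Finset.sum_const, Finset.card_univ,
    Fintype.card_fin, nsmul_eq_mul, add_sub_add_right_eq_sub]
  ring

end Residues

section Cores

variable {e : ℕ}

/-- On each runner `i` of the `e`-runner abacus, `B` consists of the positions up to level `L i`. -/
def HasLevels (B : Set ℤ) (L : Fin e → ℤ) : Prop :=
  ∀ (t : ℤ) (i : Fin e), t * e + i ∈ B ↔ t ≤ L i

variable {B B' : Set ℤ} {L : Fin e → ℤ} {a : ℤ} {lam : PartitionFun}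

lemma HasLevels.level_eq (h : HasLevels (betaSet a lam) L) (i : Fin e) :
    level e a lam i = L i := by
  simp only [level, h _ i]
  exact csSup_Iic

variable [NeZero e]

lemma mul_add_lt_mul_iff {t c : ℤ} {i : Fin e} : t * e + i < c * e ↔ t < c := by
  rw [← Int.ediv_lt_iff_lt_mul (by exact_mod_cast Nat.pos_of_neZero e), mul_add_ediv]

lemma HasLevels.eq (h : HasLevels B L) (h' : HasLevels B' L) : B = B' := by
  ext x
  obtain ⟨t, i, rfl⟩ := exists_mul_add_eq e x
  exact (h t i).trans (h' t i).symm

lemma HasLevels.isGreatest (h : HasLevels B L) (i : Fin e) :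
    IsGreatest {x : ℤ | x % (e : ℤ) = (i : ℤ) % e ∧ x ∈ B} (L i * e + i) := by
  refine ⟨⟨mul_add_modEq_iff.2 rfl, (h _ i).2 le_rfl⟩, ?_⟩
  rintro x ⟨hmod, hx⟩
  obtain ⟨t, i', rfl⟩ := exists_mul_add_eq e x
  obtain rfl := mul_add_modEq_iff.1 hmod
  have := (h t i').1 hx
  gcongr

lemma HasLevels.isLeast (h : HasLevels B L) (i : Fin e) :
    IsLeast {x : ℤ | x % (e : ℤ) = (i : ℤ) % e ∧ x ∉ B} ((L i + 1) * e + i) := by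
  refine ⟨⟨mul_add_modEq_iff.2 rfl, mt (h _ i).1 (by omega)⟩, ?_⟩
  rintro x ⟨hmod, hx⟩
  obtain ⟨t, i', rfl⟩ := exists_mul_add_eq e x
  obtain rfl := mul_add_modEq_iff.1 hmod
  have : L i' + 1 ≤ t := not_le.1 (mt (h t i').2 hx)
  gcongr

lemma HasLevels.moveBead (h : HasLevels B L) {i l : Fin e} (hil : i ≠ l) :
    HasLevels (moveBead e i l B) (L - (Pi.single i 1 - Pi.single l 1)) := by
  intro t p
  rw [AK.moveBead, (h.isGreatest i).csSup_eq, (h.isLeast l).csInf_eq, Set.mem_insert_iff,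
    Set.mem_sdiff, Set.mem_singleton_iff, mul_add_eq_iff, mul_add_eq_iff, h t p]
  simp only [Pi.sub_apply, Pi.single_apply]
  by_cases hpi : p = i <;> by_cases hpl : p = l <;> simp [hpi, hpl] <;> grind

lemma HasLevels.isECore (h : HasLevels (betaSet a lam) L) : IsECore e a lam := by
  intro x hx
  obtain ⟨t, i, rfl⟩ := exists_mul_add_eq e x
  rw [show t * e + i - e = (t - 1) * (e : ℤ) + i by ring, h]
  have := (h t i).1 hx
  omega

lemma exists_lengthLE (lam : PartitionFun) : ∃ N, lam.LengthLE N :=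
  lam.finite_support

lemma IsECore.hasLevels (h : IsECore e a lam) :
    HasLevels (betaSet a lam) fun i : Fin e => level e a lam i := by
  obtain ⟨N, hN⟩ := exists_lengthLE lam
  have he : (1 : ℤ) ≤ e := by exact_mod_cast Nat.pos_of_neZero e
  intro t i
  let T : Set ℤ := {t | t * e + i ∈ betaSet a lam}
  have hne : T.Nonempty := by
    refine ⟨-|a - N| - 1, hN.mem_betaSet.2 (.inr ?_)⟩
    nlinarith [neg_abs_le (a - N), abs_nonneg (a - N), i.isLt]
  have hbdd : BddAbove T := by
    refine ⟨|lam.beta a 0|, fun t ht => ?_⟩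
    rw [Set.mem_ofPred_eq, betaSet_eq_range] at ht
    obtain ⟨b, hb⟩ := ht
    have := (lam.beta_strictAnti a).antitone (Nat.zero_le b)
    nlinarith [le_abs_self (lam.beta a 0), abs_nonneg (lam.beta a 0)]
  have hdown (t : ℤ) (ht : t ∈ T) : t - 1 ∈ T := by
    simpa only [T, Set.mem_ofPred_eq, sub_mul, one_mul, sub_add_eq_add_sub] using h _ ht
  refine ⟨fun ht => le_csSup hbdd ht, fun ht => ?_⟩
  induction t, ht using Int.leInductionDown with
  | base => exact Int.csSup_mem hne hbdd
  | pred t _ ih => exact hdown t ih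

lemma exists_runner_eq (T : Fin e → Finset ℤ) : ∃ X : Finset ℤ, ∀ i, runner X i = T i := by
  refine ⟨(Finset.univ.sigma T).image fun y => y.2 * e + y.1, fun i => ?_⟩
  ext t
  simp only [mem_runner, Finset.mem_image, Finset.mem_sigma, Finset.mem_univ, true_and,
    mul_add_eq_iff]
  constructor
  · rintro ⟨⟨_, _⟩, ht, rfl, rfl⟩
    exact ht
  · exact fun ht => ⟨⟨i, t⟩, ht, rfl, rfl⟩

lemma two_mul_sum_Ico (c : ℤ) (n : ℕ) :
    2 * ∑ t ∈ Finset.Ico c (c + n), t = n * (2 * c + n - 1) := by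
  induction n with
  | zero => simp
  | succ n ih =>
    rw [Nat.cast_succ, ← add_assoc, ← Order.succ_eq_add_one (c + n),
      ← Finset.insert_Ico_right_eq_Ico_succ (by omega), Finset.sum_insert (by simp), mul_add, ih]
    ring

lemma exists_truncation {ι : Type*} [Finite ι] (e : ℕ) [NeZero e] (c : ι → ℤ) (b : ι → ℕ) :
    ∃ (K : ℕ) (N : ι → ℕ), ∀ j, (N j : ℤ) = c j + K * e ∧ b j ≤ N j ∧ b j ≤ K := by
  have he : 1 ≤ e := Nat.pos_of_neZero e
  obtain ⟨K, hK⟩ := (Set.finite_range fun j => b j + (c j).natAbs).bddAbove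
  have hKe : (K : ℤ) ≤ K * e := by exact_mod_cast Nat.le_mul_of_pos_right K he
  have hbound (j : ι) : b j + (c j).natAbs ≤ K := hK ⟨j, rfl⟩
  refine ⟨K, fun j => (c j + K * e).toNat, fun j => ?_⟩
  have := hbound j
  dsimp only
  generalize (K : ℤ) * e = z at *
  omega

variable {K N : ℕ}

lemma PartitionFun.LengthLE.mem_betaSet_iff_mem_runner (hlen : lam.LengthLE N)
    (hN : (N : ℤ) = a + K * e) {t : ℤ} {i : Fin e} :
    t * e + i ∈ betaSet a lam ↔ t ∈ runner (lam.beads a N) i ∨ t < -K := by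
  rw [hlen.mem_betaSet, mem_runner, hN, sub_add_cancel_left, ← neg_mul,
    mul_add_lt_mul_iff]

lemma neg_le_of_mem_runner (hN : (N : ℤ) = a + K * e) {t : ℤ} {i : Fin e}
    (ht : t ∈ runner (lam.beads a N) i) : -K ≤ t := by
  have := PartitionFun.sub_le_of_mem_beads (mem_runner.1 ht)
  rw [← not_lt, ← mul_add_lt_mul_iff (i := i)]
  linarith

lemma HasLevels.neg_le (h : HasLevels (betaSet a lam) L) (hlen : lam.LengthLE N)
    (hN : (N : ℤ) = a + K * e) (i : Fin e) : -K ≤ L i + 1 := by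
  have : -(K : ℤ) - 1 ≤ L i :=
    (h _ i).1 ((hlen.mem_betaSet_iff_mem_runner hN).2 (.inr (sub_one_lt _)))
  omega

lemma HasLevels.runner_beads (h : HasLevels (betaSet a lam) L) (hlen : lam.LengthLE N)
    (hN : (N : ℤ) = a + K * e) (i : Fin e) :
    runner (lam.beads a N) i = Finset.Ico (-(K : ℤ)) (L i + 1) := by
  ext t
  have hmem := (h t i).symm.trans (hlen.mem_betaSet_iff_mem_runner hN)
  have hle := neg_le_of_mem_runner hN (lam := lam) (t := t) (i := i)
  rw [Finset.mem_Ico, Int.lt_add_one_iff, hmem, ← not_lt]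
  rw [← not_lt] at hle
  tauto

lemma HasLevels.runnerCount_beads (h : HasLevels (betaSet a lam) L) (hlen : lam.LengthLE N)
    (hN : (N : ℤ) = a + K * e) (i : Fin e) :
    runnerCount e (lam.beads a N) i = L i + 1 + K := by
  have := h.neg_le hlen hN i
  rw [runnerCount_eq_card_runner, h.runner_beads hlen hN, Int.card_Ico]
  omega

lemma HasLevels.sum_eq (h : HasLevels (betaSet a lam) L) : ∑ i, L i = a - e := by
  obtain ⟨b, hb⟩ := exists_lengthLE lam
  obtain ⟨K, N, hKN⟩ := exists_truncation e (fun _ : Unit => a) fun _ => b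
  obtain ⟨hN, hbN, -⟩ := hKN ()
  have hlen := hb.mono hbN
  have hsum := sum_runnerCount e (lam.beads a (N ()))
  simp only [h.runnerCount_beads hlen hN, PartitionFun.card_beads, Finset.sum_add_distrib,
    Finset.sum_const, Finset.card_univ, Fintype.card_fin, nsmul_eq_mul, mul_one, hN] at hsum
  linarith

lemma HasLevels.two_mul_levelSum_beads (h : HasLevels (betaSet a lam) L) (hlen : lam.LengthLE N)
    (hN : (N : ℤ) = a + K * e) :
    2 * levelSum e (lam.beads a N) 0 = ∑ i, L i ^ 2 + (a - e) - e * (K * (K + 1)) := by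
  have hrunner (i : Fin e) :
      2 * ∑ t ∈ runner (lam.beads a N) i, t = L i ^ 2 + L i - K * (K + 1) := by
    obtain ⟨n, hn⟩ := Int.eq_ofNat_of_zero_le (neg_le_iff_add_nonneg.1 (h.neg_le hlen hN i))
    rw [h.runner_beads hlen hN, show L i + 1 = -K + n by omega, two_mul_sum_Ico,
      show L i = n - 1 - K by omega]
    ring
  rw [levelSum_zero_eq_sum_runner, Finset.mul_sum, ← h.sum_eq]
  simp only [hrunner, Finset.sum_sub_distrib, Finset.sum_add_distrib, Finset.sum_const,
    Finset.card_univ, Fintype.card_fin, nsmul_eq_mul]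

lemma exists_lengthLE_hasLevels (hN : (N : ℤ) = a + K * e) (hsum : ∑ i, L i = a - e)
    (hL : ∀ i, -K ≤ L i + 1) :
    ∃ lam : PartitionFun, lam.LengthLE N ∧ HasLevels (betaSet a lam) L := by
  obtain ⟨X, hX⟩ := exists_runner_eq fun i => Finset.Ico (-(K : ℤ)) (L i + 1)
  have hcount (i : Fin e) : runnerCount e X i = L i + 1 + K := by
    have := hL i
    rw [runnerCount_eq_card_runner, hX, Int.card_Ico]
    omega
  have hcard : X.card = N := by
    zify
    rw [← sum_runnerCount e X, hN]
    simp only [hcount, Finset.sum_add_distrib, hsum, Finset.sum_const, Finset.card_univ,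
      Fintype.card_fin, nsmul_eq_mul]
    ring
  have hmem {t : ℤ} {i : Fin e} : t * e + i ∈ X ↔ -K ≤ t ∧ t < L i + 1 := by
    rw [← mem_runner, hX, Finset.mem_Ico]
  have hlow (x : ℤ) (hx : x ∈ X) : a - N ≤ x := by
    obtain ⟨t, i, rfl⟩ := exists_mul_add_eq e x
    have := mt (mul_add_lt_mul_iff (i := i)).1 (hmem.1 hx).1.not_gt
    linarith
  obtain ⟨lam, hlen, rfl⟩ := exists_beads_eq hcard hlow
  refine ⟨lam, hlen, fun t i => ?_⟩
  have := hL i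
  rw [hlen.mem_betaSet_iff_mem_runner hN, mem_runner, hmem]
  omega

lemma exists_hasLevels (hsum : ∑ i, L i = a - e) :
    ∃ lam : PartitionFun, HasLevels (betaSet a lam) L := by
  obtain ⟨K, N, hKN⟩ := exists_truncation e (fun _ : Fin e => a) fun i => (L i).natAbs
  have hL (i : Fin e) : -K ≤ L i + 1 := by
    have := (hKN i).2.2
    omega
  have ⟨lam, _, hlam⟩ := exists_lengthLE_hasLevels (hKN 0).1 hsum hL
  exact ⟨lam, hlam⟩

end Cores
section Multicores

variable {e r : ℕ} {a : Fin r → ℤ} {m m' : Multipartition r}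

/-- The matrix of levels `ℓ^a_{ij}`, with one row for each component `j` and one column for each
runner `i`. It determines a multicore. -/
noncomputable def levelMatrix (e : ℕ) (a : Fin r → ℤ) (m : Multipartition r) :
    Matrix (Fin r) (Fin e) ℤ :=
  fun j i => level e (a j) (m j) i

lemma levelMatrix_eq {M : Matrix (Fin r) (Fin e) ℤ}
    (h : ∀ j, HasLevels (betaSet (a j) (m j)) (M j)) : levelMatrix e a m = M :=
  Matrix.ext fun j i => (h j).level_eq i

lemma gammaD_eq_rectDiff (m : Multipartition r) (i l : Fin e) (j k : Fin r) :
    gammaD e a m i l j k = rectDiff (levelMatrix e a m) j k i l :=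
  rfl

lemma exists_common_truncation (e : ℕ) [NeZero e] (a : Fin r → ℤ) (lam mu : Multipartition r) :
    ∃ (K : ℕ) (N : Fin r → ℕ), (∀ j, (N j : ℤ) = a j + K * e) ∧
      (∀ j, (lam j).LengthLE (N j)) ∧ ∀ j, (mu j).LengthLE (N j) := by
  choose b hb using fun j => exists_lengthLE (lam j)
  choose b' hb' using fun j => exists_lengthLE (mu j)
  obtain ⟨K, N, hKN⟩ := exists_truncation e a (b ⊔ b')
  exact ⟨K, N, fun j => (hKN j).1, fun j => (hb j).mono (le_sup_left.trans (hKN j).2.1),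
    fun j => (hb' j).mono (le_sup_right.trans (hKN j).2.1)⟩

variable [NeZero e]

lemma IsMulticore.hasLevels (hm : IsMulticore e a m) (j : Fin r) :
    HasLevels (betaSet (a j) (m j)) (levelMatrix e a m j) :=
  (hm j).hasLevels

lemma IsMulticore.sameHub_iff (hm : IsMulticore e a m) (hm' : IsMulticore e a m') :
    SameHub e a m m' ↔ SameMargins (levelMatrix e a m) (levelMatrix e a m') := by
  obtain ⟨K, N, hN, hlen, hlen'⟩ := exists_common_truncation e a m m'
  have hcol {x : Multipartition r} (hx : IsMulticore e a x) (hlen : ∀ j, (x j).LengthLE (N j))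
      (i : Fin e) : totalRunnerCount e a N x i = ∑ j, levelMatrix e a x j i + r * (1 + K) := by
    simp only [totalRunnerCount, (hx.hasLevels _).runnerCount_beads (hlen _) (hN _), add_assoc,
      Finset.sum_add_distrib (f := fun j => levelMatrix e a x j i), Finset.sum_const,
      Finset.card_univ, Fintype.card_fin, nsmul_eq_mul]
  constructor
  · refine fun h => ⟨fun j => by rw [(hm.hasLevels j).sum_eq, (hm'.hasLevels j).sum_eq],
      fun i => ?_⟩
    have := h.totalRunnerCount_eq hlen hlen' i
    rwa [hcol hm hlen, hcol hm' hlen', add_left_inj] at this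
  · refine fun h => sameHub_of_totalRunnerCount_eq hlen hlen' fun i => ?_
    rw [hcol hm hlen, hcol hm' hlen', h.2 i]

lemma IsMulticore.two_mul_weight_sub_weight (hm : IsMulticore e a m) (hm' : IsMulticore e a m')
    (h : SameHub e a m m') :
    2 * (weight e a m - weight e a m') =
      r * ((energy (levelMatrix e a m) - energy (levelMatrix e a m') : ℤ) : ℚ) := by
  obtain ⟨K, N, hN, hlen, hlen'⟩ := exists_common_truncation e a m m'
  have hlevel {x : Multipartition r} (hx : IsMulticore e a x) (hlen : ∀ j, (x j).LengthLE (N j)) :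
      2 * totalLevelSum e a N x 0 =
        energy (levelMatrix e a x) + ∑ j, (a j - e) - r * (e * (K * (K + 1))) := by
    simp only [totalLevelSum, Finset.mul_sum, energy,
      (hx.hasLevels _).two_mul_levelSum_beads (hlen _) (hN _), Finset.sum_sub_distrib,
      Finset.sum_add_distrib, Finset.sum_const, Finset.card_univ, Fintype.card_fin, nsmul_eq_mul]
  have hdiff : energy (levelMatrix e a m) - energy (levelMatrix e a m') =
      2 * (totalLevelSum e a N m 0 - totalLevelSum e a N m' 0) := by
    linarith [hlevel hm hlen, hlevel hm' hlen']
  rw [h.weight_sub_weight hlen hlen', hdiff]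
  push_cast
  ring

lemma IsMulticore.weight_le_of_energy_le (hm : IsMulticore e a m) (hm' : IsMulticore e a m')
    (h : SameHub e a m m') (hle : energy (levelMatrix e a m) ≤ energy (levelMatrix e a m')) :
    weight e a m ≤ weight e a m' := by
  have hweight := hm.two_mul_weight_sub_weight hm' h
  have hdiff : ((energy (levelMatrix e a m) - energy (levelMatrix e a m') : ℤ) : ℚ) ≤ 0 := by
    exact_mod_cast sub_nonpos.2 hle
  linarith [mul_nonpos_of_nonneg_of_nonpos (Nat.cast_nonneg (α := ℚ) r) hdiff]

lemma IsMulticore.weight_lt_of_energy_lt (hr : 0 < r) (hm : IsMulticore e a m)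
    (hm' : IsMulticore e a m') (h : SameHub e a m m')
    (hlt : energy (levelMatrix e a m) < energy (levelMatrix e a m')) :
    weight e a m < weight e a m' := by
  have hweight := hm.two_mul_weight_sub_weight hm' h
  have hdiff : ((energy (levelMatrix e a m) - energy (levelMatrix e a m') : ℤ) : ℚ) < 0 := by
    exact_mod_cast sub_neg.2 hlt
  linarith [mul_neg_of_pos_of_neg (Nat.cast_pos (α := ℚ).2 hr) hdiff]

-- Pushing all beads up their runners preserves the number of beads on each runner and does not
-- increase the sum of their levels.
lemma exists_isMulticore_weight_le (mu : Multipartition r) :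
    ∃ m, IsMulticore e a m ∧ SameHub e a mu m ∧ weight e a m ≤ weight e a mu := by
  obtain ⟨K, N, hN, hlen, -⟩ := exists_common_truncation e a mu mu
  let L (j : Fin r) (i : Fin e) : ℤ := runnerCount e ((mu j).beads (a j) (N j)) i - 1 - K
  have hsum (j : Fin r) : ∑ i, L j i = a j - e := by
    simp only [L, Finset.sum_sub_distrib, sum_runnerCount, PartitionFun.card_beads, hN,
      Finset.sum_const, Finset.card_univ, Fintype.card_fin, nsmul_eq_mul]
    ring
  have hL (j : Fin r) (i : Fin e) : -K ≤ L j i + 1 := by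
    simp only [L, runnerCount_eq_card_runner]
    omega
  choose m hlen' hm using fun j => exists_lengthLE_hasLevels (hN j) (hsum j) (hL j)
  have hhub : SameHub e a m mu := sameHub_of_totalRunnerCount_eq hlen' hlen fun i => by
    simp only [totalRunnerCount, (hm _).runnerCount_beads (hlen' _) (hN _), L]
    exact Finset.sum_congr rfl fun j _ => by ring
  have hle : totalLevelSum e a N m 0 ≤ totalLevelSum e a N mu 0 := by
    simp only [totalLevelSum, levelSum_zero_eq_sum_runner]
    refine Finset.sum_le_sum fun j _ => Finset.sum_le_sum fun i _ => ?_
    rw [(hm j).runner_beads (hlen' j) (hN j),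
      show L j i + 1 = -K + (runner ((mu j).beads (a j) (N j)) i).card by
        simp only [L, runnerCount_eq_card_runner]; ring]
    exact Finset.sum_Ico_le_sum fun t ht => neg_le_of_mem_runner (hN j) ht
  refine ⟨m, fun j => (hm j).isECore, fun i => (hhub i).symm, sub_nonpos.1 ?_⟩
  rw [hhub.weight_sub_weight hlen' hlen]
  exact mul_nonpos_of_nonneg_of_nonpos r.cast_nonneg (by exact_mod_cast sub_nonpos.2 hle)

lemma IsMulticore.minimalWeight (hm : IsMulticore e a m)
    (hmin : IsEnergyMinimal (levelMatrix e a m)) : MinimalWeight e a m := by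
  intro mu hmu
  obtain ⟨m', hm', hhub, hle⟩ := exists_isMulticore_weight_le (e := e) (a := a) mu
  have hmm' : SameHub e a m m' := fun i => (hmu i).trans (hhub i)
  exact (hm.weight_le_of_energy_le hm' hmm' (hmin _ ((hm.sameHub_iff hm').1 hmm'))).trans hle

lemma isSwap_of_hasLevels {M : Matrix (Fin r) (Fin e) ℤ} {i l : Fin e} {j k : Fin r}
    (hil : i ≠ l) (hjk : j ≠ k) (hm : ∀ p, HasLevels (betaSet (a p) (m p)) (M p))
    (hm' : ∀ p, HasLevels (betaSet (a p) (m' p)) (squareMove M j k i l p)) :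
    IsSwap e a i l j k m m' := by
  intro p
  rw [swapSets, Function.update_of_ne hjk.symm]
  have hrow : squareMove M j k i l p = M p -
      (Pi.single j 1 - Pi.single k 1 : Fin r → ℤ) p • (Pi.single i 1 - Pi.single l 1) := rfl
  refine (hrow ▸ hm' p).eq ?_
  rcases eq_or_ne p k with rfl | hpk
  · rw [Function.update_self]
    simpa [hjk.symm] using (hm p).moveBead hil.symm
  rw [Function.update_of_ne hpk]
  rcases eq_or_ne p j with rfl | hpj
  · rw [Function.update_self]
    simpa [hjk] using (hm p).moveBead hil
  · rw [Function.update_of_ne hpj]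
    simpa [hpk, hpj] using hm p

lemma IsMulticore.exists_isSwap (hm : IsMulticore e a m) {i l : Fin e} {j k : Fin r}
    (hil : i ≠ l) (hjk : j ≠ k) :
    ∃ m', IsMulticore e a m' ∧ SameHub e a m' m ∧ IsSwap e a i l j k m m' ∧
      levelMatrix e a m' = squareMove (levelMatrix e a m) j k i l := by
  have hmargins := sameMargins_squareMove (levelMatrix e a m) j k i l
  choose m' hm' using fun p => exists_hasLevels ((hmargins.1 p).symm.trans (hm.hasLevels p).sum_eq)
  have hcore : IsMulticore e a m' := fun p => (hm' p).isECore
  have hlevel := levelMatrix_eq hm'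
  exact ⟨m', hcore, (hcore.sameHub_iff hm).2 (hlevel ▸ hmargins.symm),
    isSwap_of_hasLevels hil hjk hm.hasLevels hm', hlevel⟩

end Multicores

section Sequences

variable {α : Type*} {R R' : α → α → Prop} {x y z : α}

lemma exists_seq_of_reflTransGen (h : Relation.ReflTransGen R x y) :
    ∃ (s : ℕ) (f : ℕ → α), f 0 = x ∧ f s = y ∧ ∀ t < s, R (f t) (f (t + 1)) := by
  induction h using Relation.ReflTransGen.head_induction_on with
  | refl => exact ⟨0, fun _ => y, rfl, rfl, by simp⟩
  | @head w x hwx _ ih =>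
    obtain ⟨s, f, rfl, hs, hR⟩ := ih
    refine ⟨s + 1, fun t => Nat.casesOn t w f, rfl, hs, ?_⟩
    rintro (_ | t) ht
    · exact hwx
    · exact hR t (by omega)

lemma exists_seq_of_reflTransGen_of_reflTransGen (h : Relation.ReflTransGen R x y)
    (h' : Relation.ReflTransGen R' y z) :
    ∃ (s : ℕ) (f : ℕ → α) (v : ℕ), v ≤ s ∧ f 0 = x ∧ f v = y ∧ f s = z ∧
      (∀ t < v, R (f t) (f (t + 1))) ∧ ∀ t, v ≤ t → t < s → R' (f t) (f (t + 1)) := by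
  induction h using Relation.ReflTransGen.head_induction_on with
  | refl =>
    obtain ⟨s, f, hf, hs, hR'⟩ := exists_seq_of_reflTransGen h'
    exact ⟨s, f, 0, s.zero_le, hf, hf, hs, by simp, fun t _ => hR' t⟩
  | @head w x hwx _ ih =>
    obtain ⟨s, f, v, hvs, rfl, hv, hs, hR, hR'⟩ := ih
    refine ⟨s + 1, fun t => Nat.casesOn t w f, v + 1, by omega, rfl, hv, hs, ?_, ?_⟩
    · rintro (_ | t) ht
      · exact hwx
      · exact hR t (by omega)
    · rintro (_ | t) hvt hts
      · omega
      · exact hR' t (by omega) (by omega)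

end Sequences

section SwapSteps

variable {e r : ℕ} {a : Fin r → ℤ} {m m' : Multipartition r}

/-- `m'` is a multicore with the same hub as `m`, arises from `m` by some `s^{jk}_{il}`, and
satisfies `rel (w(m')) (w(m))`. -/
def SwapStep (e : ℕ) (a : Fin r → ℤ) (rel : ℚ → ℚ → Prop) (m m' : Multipartition r) : Prop :=
  IsMulticore e a m' ∧ SameHub e a m' m ∧
    (∃ (i l : Fin e) (j k : Fin r), i ≠ l ∧ IsSwap e a i l j k m m') ∧
      rel (weight e a m') (weight e a m)

lemma SwapStep.mono {rel rel' : ℚ → ℚ → Prop} (hrel : ∀ p q, rel p q → rel' p q)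
    (h : SwapStep e a rel m m') : SwapStep e a rel' m m' :=
  ⟨h.1, h.2.1, h.2.2.1, hrel _ _ h.2.2.2⟩

lemma isMulticore_and_sameHub_of_swapStep {rel : ℚ → ℚ → Prop} {seq : ℕ → Multipartition r} {s : ℕ}
    (hcore : IsMulticore e a (seq 0)) (hstep : ∀ t < s, SwapStep e a rel (seq t) (seq (t + 1))) :
    ∀ t ≤ s, IsMulticore e a (seq t) ∧ SameHub e a (seq t) (seq 0) := by
  intro t ht
  induction t with
  | zero => exact ⟨hcore, fun _ => rfl⟩
  | succ t ih =>
    obtain ⟨hcore', hhub, -⟩ := hstep t ht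
    exact ⟨hcore', fun i => (hhub i).trans ((ih (by omega)).2 i)⟩

variable [NeZero e]

lemma IsMulticore.exists_reflTransGen_swapStep {relE : ℤ → ℤ → Prop} {relW : ℚ → ℚ → Prop}
    (hrel : ∀ {x y : Multipartition r}, IsMulticore e a x → IsMulticore e a y → SameHub e a x y →
      relE (energy (levelMatrix e a x)) (energy (levelMatrix e a y)) →
        relW (weight e a x) (weight e a y))
    (hm : IsMulticore e a m) {M : Matrix (Fin r) (Fin e) ℤ}
    (h : Relation.ReflTransGen (SquareStep relE) (levelMatrix e a m) M) :
    ∃ m', IsMulticore e a m' ∧ Relation.ReflTransGen (SwapStep e a relW) m m' ∧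
      levelMatrix e a m' = M := by
  induction h with
  | refl => exact ⟨m, hm, .refl, rfl⟩
  | tail _ hstep ih =>
    obtain ⟨x, hx, hmx, rfl⟩ := ih
    obtain ⟨j, k, i, l, hjk, hil, rfl, henergy⟩ := hstep
    obtain ⟨m', hm', hhub, hswap, hlevel⟩ := hx.exists_isSwap hil hjk
    rw [← hlevel] at henergy
    exact ⟨m', hm', hmx.tail ⟨hm', hhub, ⟨i, l, j, k, hil, hswap⟩, hrel hm' hx hhub henergy⟩,
      hlevel⟩

lemma IsMulticore.exists_reflTransGen_abs_gammaD_le_two (hr : 0 < r) (hm : IsMulticore e a m) :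
    ∃ m', IsMulticore e a m' ∧ Relation.ReflTransGen (SwapStep e a (· < ·)) m m' ∧
      ∀ (i l : Fin e) (j k : Fin r), |gammaD e a m' i l j k| ≤ 2 := by
  obtain ⟨M, hM, hbound⟩ := exists_reflTransGen_abs_rectDiff_le_two (levelMatrix e a m)
  obtain ⟨m', hm', hsteps, rfl⟩ := hm.exists_reflTransGen_swapStep (weight_lt_of_energy_lt hr) hM
  exact ⟨m', hm', hsteps, fun i l j k => gammaD_eq_rectDiff m' i l j k ▸ hbound j k i l⟩

lemma IsMulticore.exists_reflTransGen_minimalWeight (hm : IsMulticore e a m) :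
    ∃ m', Relation.ReflTransGen (SwapStep e a (· ≤ ·)) m m' ∧ MinimalWeight e a m' := by
  obtain ⟨M, hM, hmin⟩ := exists_reflTransGen_isEnergyMinimal (levelMatrix e a m)
  obtain ⟨m', hm', hsteps, rfl⟩ := hm.exists_reflTransGen_swapStep weight_le_of_energy_le hM
  exact ⟨m', hsteps, hm'.minimalWeight hmin⟩

end SwapSteps

/-- Proposition 4.2: from any multicore `m` there is a sequence of
multicores (all with the same core block as `m`, i.e. the same hub), each obtained
by some `s^{jk}_{il}`, ending in a multicore `μ` in the core block of `m`, with
weights strictly decreasing up to some index `v` and non-increasing afterwards,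
and `|γ^{jk}_{il}(m_v)| ≤ 2` for all `i, l, j, k`. -/
theorem stmt_2 {e r : ℕ} (he : 2 ≤ e) (hr : 0 < r) (a : Fin r → ℤ)
    (m : Multipartition r) (hcore : IsMulticore e a m) :
    ∃ (s : ℕ) (seq : ℕ → Multipartition r),
      seq 0 = m ∧
      (∀ t ≤ s, IsMulticore e a (seq t) ∧ SameHub e a (seq t) m) ∧
      SameHub e a (seq s) m ∧ MinimalWeight e a (seq s) ∧
      (∀ t < s, ∃ (i l : ℕ) (j k : Fin r), i < e ∧ l < e ∧ i ≠ l ∧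
        IsSwap e a i l j k (seq t) (seq (t + 1))) ∧
      ∃ v ≤ s,
        (∀ t < v, weight e a (seq (t + 1)) < weight e a (seq t)) ∧
        (∀ t, v ≤ t → t < s → weight e a (seq (t + 1)) ≤ weight e a (seq t)) ∧
        (∀ i < e, ∀ l < e, ∀ j k : Fin r, |gammaD e a (seq v) i l j k| ≤ 2) := by
  have : NeZero e := ⟨by omega⟩
  obtain ⟨y, hy, hlt, hbound⟩ := hcore.exists_reflTransGen_abs_gammaD_le_two hr
  obtain ⟨z, hle, hmin⟩ := hy.exists_reflTransGen_minimalWeight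
  obtain ⟨s, seq, v, hvs, rfl, rfl, rfl, hlt, hle⟩ :=
    exists_seq_of_reflTransGen_of_reflTransGen hlt hle
  have hstep (t : ℕ) (ht : t < s) : SwapStep e a (· ≤ ·) (seq t) (seq (t + 1)) :=
    (lt_or_ge t v).elim (fun htv => (hlt t htv).mono fun _ _ => le_of_lt) fun hvt => hle t hvt ht
  have hblock := isMulticore_and_sameHub_of_swapStep hcore hstep
  refine ⟨s, seq, rfl, hblock, (hblock s le_rfl).2, hmin, fun t ht => ?_, v, hvs,
    fun t ht => (hlt t ht).2.2.2, fun t hvt hts => (hle t hvt hts).2.2.2,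
    fun i hi l hl => hbound ⟨i, hi⟩ ⟨l, hl⟩⟩
  obtain ⟨i, l, j, k, hil, hswap⟩ := (hstep t ht).2.2.1
  exact ⟨i, l, j, k, i.isLt, l.isLt, Fin.val_ne_of_ne hil, hswap⟩

end AK
end

section
/- Suppose that m is a multicore such that |γ^{jk}_{il}(m)| ≤ 2 for all i,l ∈ {0,…,e−1} and j,k ∈ {1,…,r}. Fix ī ∈ ℤ/eℤ, and let d be the integer such that d_ī(m) = d − 1. Then δ^j_ī(m) ∈ {d−1, d, d+1} for all j ∈ {1,…,r}. -/
/-!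
Combinatorial framework for multipartitions, residues, β-sets, abacus levels,
weights, hubs, core blocks and Scopes-type moves, following Fayers and the paper.
Rows and columns of Young diagrams are indexed from 0, so the node in row `b`
and column `c` (0-based) of component `j` has residue `a j + c - b` mod `e`.
-/

open scoped Classical

namespace AK

/-!
The content `a_j + c - b` of a removable node of component `j` is an element `x` of the β-set `B`
with `x - 1 ∉ B`, and that of an addable node is an `x ∉ B` with `x - 1 ∈ B`. If the component is
an `e`-core, then the integers `q` with `q * e + i ∈ B` are exactly those up to some level `L i`,
so there are `max (L i - L (i - 1)) 0` removable and `max (L (i - 1) - L i) 0` addable `i`-nodes,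
and `δ_i = L i - L (i - 1)`. Subtracting this for two components turns the difference of
the `δ_i` into some `γ^{jk}_{il}`, which is at most `2` in absolute value.
-/

/-- The content of the node `p = (b, c)`: an integer whose class mod `e` is the residue of `p`. -/
def content (aj : ℤ) (p : ℕ × ℕ) : ℤ := aj + p.2 - p.1

/-- The β-number contributed by row `b`; the β-set is the range of this function. -/
def betaNumber (aj : ℤ) (lam : PartitionFun) (b : ℕ) : ℤ := lam.part b + aj - (b + 1)

/-- The largest `q` with `q * e + i ∈ S`. In contrast to `level`, the runner `i` is an arbitrary
integer, so that runner `i - 1` needs no case distinction; replacing `i` by `i + e` lowers the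
level by one. -/
noncomputable def beadLevel (e : ℕ) (S : Set ℤ) (i : ℤ) : ℤ := sSup {q : ℤ | q * e + i ∈ S}

section BetaSet

variable (aj : ℤ) (lam : PartitionFun)

theorem strictAnti_betaNumber : StrictAnti (betaNumber aj lam) := by
  intro b b' hb
  have := lam.antitone hb.le
  unfold betaNumber
  omega

theorem mem_betaSet_iff {x : ℤ} : x ∈ betaSet aj lam ↔ ∃ b, betaNumber aj lam b = x :=
  exists_congr fun _ => eq_comm

theorem bddAbove_betaSet : BddAbove (betaSet aj lam) := by
  refine ⟨betaNumber aj lam 0, fun x hx => ?_⟩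
  obtain ⟨b, rfl⟩ := (mem_betaSet_iff aj lam).1 hx
  exact (strictAnti_betaNumber aj lam).antitone b.zero_le

theorem exists_Iic_subset_betaSet : ∃ M, Set.Iic M ⊆ betaSet aj lam := by
  obtain ⟨N, hN⟩ := lam.finite_support
  refine ⟨aj - N - 1, fun x (hx : x ≤ _) => ⟨(aj - x - 1).toNat, ?_⟩⟩
  rw [hN _ (by omega)]
  omega

theorem betaNumber_sub_one_notMem_betaSet_iff (b : ℕ) :
    betaNumber aj lam b - 1 ∉ betaSet aj lam ↔ lam.part (b + 1) < lam.part b := by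
  have hstep := lam.antitone (Nat.le_add_right b 1)
  rw [mem_betaSet_iff, ← not_le, not_iff_not]
  constructor
  · rintro ⟨b', hb'⟩
    have hbb' : b < b' := (strictAnti_betaNumber aj lam).lt_iff_gt.1 (by omega)
    have := lam.antitone (Nat.add_one_le_of_lt hbb')
    unfold betaNumber at hb'
    omega
  · intro h
    exact ⟨b + 1, by unfold betaNumber; omega⟩

theorem betaNumber_add_one_notMem_betaSet_iff (b : ℕ) :
    betaNumber aj lam b + 1 ∉ betaSet aj lam ↔ b = 0 ∨ lam.part b < lam.part (b - 1) := by
  have hstep := lam.antitone (Nat.sub_le b 1)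
  rw [← not_iff_not, not_not, mem_betaSet_iff]
  constructor
  · rintro ⟨b', hb'⟩
    have hbb' : b' < b := (strictAnti_betaNumber aj lam).lt_iff_gt.1 (by omega)
    have := lam.antitone (Nat.le_sub_one_of_lt hbb')
    unfold betaNumber at hb'
    omega
  · intro h
    exact ⟨b - 1, by unfold betaNumber; omega⟩

theorem bijOn_content_removable :
    Set.BijOn (content aj) {p | lam.Removable p.1 p.2}
      {x | x ∈ betaSet aj lam ∧ x - 1 ∉ betaSet aj lam} := by
  have content_eq {p : ℕ × ℕ} (hp : lam.Removable p.1 p.2) :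
      content aj p = betaNumber aj lam p.1 := by
    have := hp.1
    unfold content betaNumber
    omega
  refine ⟨fun p hp => ?_, fun p hp p' hp' h => ?_, ?_⟩
  · rw [content_eq hp]
    exact ⟨⟨p.1, rfl⟩, (betaNumber_sub_one_notMem_betaSet_iff aj lam p.1).2
      (hp.1 ▸ Nat.lt_succ_of_le hp.2)⟩
  · rw [content_eq hp, content_eq hp'] at h
    have hrow : p.1 = p'.1 := (strictAnti_betaNumber aj lam).injective h
    exact Prod.ext hrow (Nat.succ_injective (hp.1.symm.trans (hrow ▸ hp'.1)))
  · rintro _ ⟨⟨b, rfl⟩, hpred⟩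
    have hlt := (betaNumber_sub_one_notMem_betaSet_iff aj lam b).1 hpred
    have hp : lam.Removable b (lam.part b - 1) :=
      ⟨(Nat.sub_one_add_one (by omega)).symm, Nat.le_sub_one_of_lt hlt⟩
    exact ⟨(b, lam.part b - 1), hp, content_eq hp⟩

theorem bijOn_content_addable :
    Set.BijOn (content aj) {p | lam.Addable p.1 p.2}
      {x | x - 1 ∈ betaSet aj lam ∧ x ∉ betaSet aj lam} := by
  have content_eq {p : ℕ × ℕ} (hp : lam.Addable p.1 p.2) :
      content aj p = betaNumber aj lam p.1 + 1 := by
    have := hp.1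
    unfold content betaNumber
    omega
  refine ⟨fun p hp => ?_, fun p hp p' hp' h => ?_, ?_⟩
  · rw [content_eq hp]
    exact ⟨⟨p.1, add_sub_cancel_right _ _⟩,
      (betaNumber_add_one_notMem_betaSet_iff aj lam p.1).2 hp.2⟩
  · rw [content_eq hp, content_eq hp'] at h
    have hrow : p.1 = p'.1 := (strictAnti_betaNumber aj lam).injective (add_right_cancel h)
    exact Prod.ext hrow (hp.1.symm.trans (hrow ▸ hp'.1))
  · rintro x ⟨hmem, hx⟩
    obtain ⟨b, hb⟩ := (mem_betaSet_iff aj lam).1 hmem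
    obtain rfl : betaNumber aj lam b + 1 = x := by omega
    have hp : lam.Addable b (lam.part b) :=
      ⟨rfl, (betaNumber_add_one_notMem_betaSet_iff aj lam b).1 hx⟩
    exact ⟨(b, lam.part b), hp, content_eq hp⟩

end BetaSet

section Runner

variable {e : ℕ}

theorem ncard_residueClass_of_forall_mem_iff (he : 0 < e) {S : Set ℤ} {i L M : ℤ}
    (hS : ∀ q : ℤ, q * e + i ∈ S ↔ M < q ∧ q ≤ L) :
    Set.ncard {x | x ∈ S ∧ x % (e : ℤ) = i % e} = (L - M).toNat := by
  have hbij : Set.BijOn (fun q : ℤ => q * e + i) (Set.Ioc M L)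
      {x | x ∈ S ∧ x % (e : ℤ) = i % e} := by
    refine ⟨fun q hq => ⟨(hS q).2 hq, by simp⟩, fun q _ q' _ h => ?_, ?_⟩
    · exact mul_right_cancel₀ (by omega) (add_right_cancel h)
    · rintro x ⟨hx, hmod⟩
      obtain ⟨q, hq⟩ := Int.ModEq.dvd (show i ≡ x [ZMOD e] from hmod.symm)
      obtain rfl : q * e + i = x := by linarith
      exact ⟨q, (hS q).1 hx, rfl⟩
  rw [← hbij.ncard_eq, ← Finset.coe_Ioc, Set.ncard_coe_finset, Int.card_Ioc]

theorem ncard_residueClass_of_bijOn (he : 0 < e) {α : Type*} {f : α → ℤ} {s : Set α} {S : Set ℤ}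
    (hf : Set.BijOn f s S) {i L M : ℤ} (hS : ∀ q : ℤ, q * e + i ∈ S ↔ M < q ∧ q ≤ L) :
    Set.ncard {p | p ∈ s ∧ f p % (e : ℤ) = i % e} = (L - M).toNat := by
  have hbij : Set.BijOn f (s ∩ f ⁻¹' {x | x % (e : ℤ) = i % e})
      (S ∩ {x | x % (e : ℤ) = i % e}) := by
    rw [← hf.image_eq, ← Set.image_inter_preimage]
    exact (hf.injOn.mono Set.inter_subset_left).bijOn_image
  exact hbij.ncard_eq.trans (ncard_residueClass_of_forall_mem_iff he hS)

theorem le_beadLevel_iff (he : 0 < e) {S : Set ℤ} (hlow : ∃ M, Set.Iic M ⊆ S) (hbdd : BddAbove S)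
    (hcore : ∀ x ∈ S, x - e ∈ S) (i q : ℤ) : q ≤ beadLevel e S i ↔ q * e + i ∈ S := by
  have he' : (0 : ℤ) < e := by exact_mod_cast he
  have hne : {q : ℤ | q * e + i ∈ S}.Nonempty := by
    obtain ⟨M, hM⟩ := hlow
    exact ⟨(M - i) / e, hM (le_sub_iff_add_le.1 (Int.ediv_mul_le _ he'.ne'))⟩
  have hbdd' : BddAbove {q : ℤ | q * e + i ∈ S} := by
    obtain ⟨M, hM⟩ := hbdd
    exact ⟨(M - i) / e, fun q hq =>
      (Int.le_ediv_iff_mul_le he').2 (le_sub_iff_add_le.2 (hM hq))⟩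
  refine ⟨fun h => ?_, fun h => le_csSup hbdd' h⟩
  induction q, h using Int.leInductionDown with
  | base => exact Int.csSup_mem hne hbdd'
  | pred q _ hq =>
    rw [sub_one_mul, sub_add_eq_add_sub]
    exact hcore _ hq

variable {aj : ℤ} {lam : PartitionFun}

theorem IsECore.le_beadLevel_iff (he : 0 < e) (hcore : IsECore e aj lam) (i q : ℤ) :
    q ≤ beadLevel e (betaSet aj lam) i ↔ q * e + i ∈ betaSet aj lam :=
  AK.le_beadLevel_iff he (exists_Iic_subset_betaSet aj lam) (bddAbove_betaSet aj lam) hcore i q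

theorem IsECore.le_beadLevel_sub_one_iff (he : 0 < e) (hcore : IsECore e aj lam) (i q : ℤ) :
    q ≤ beadLevel e (betaSet aj lam) (i - 1) ↔ q * e + i - 1 ∈ betaSet aj lam := by
  rw [hcore.le_beadLevel_iff he, add_sub_assoc]

theorem IsECore.beadLevel_eq_level_sub (he : 0 < e) (hcore : IsECore e aj lam) (i : ℤ) :
    beadLevel e (betaSet aj lam) i = level e aj lam (i % e).toNat - i / e := by
  have hmod : ((i % e).toNat : ℤ) = i % e := Int.toNat_of_nonneg (Int.emod_nonneg _ (by omega))
  refine eq_of_forall_le_iff fun q => ?_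
  calc q ≤ beadLevel e (betaSet aj lam) i
      ↔ q * e + i ∈ betaSet aj lam := hcore.le_beadLevel_iff he i q
    _ ↔ (q + i / e) * e + (i % e).toNat ∈ betaSet aj lam := by
        rw [hmod, add_mul, add_assoc, Int.ediv_mul_add_emod]
    _ ↔ q + i / e ≤ level e aj lam (i % e).toNat := (hcore.le_beadLevel_iff he _ _).symm
    _ ↔ q ≤ level e aj lam (i % e).toNat - i / e := le_sub_iff_add_le.symm

end Runner

section Delta

variable {e r : ℕ} {a : Fin r → ℤ} {m : Multipartition r} {j : Fin r}

theorem removableCount_eq_toNat (he : 0 < e) (hcore : IsECore e (a j) (m j)) (i : ℤ) :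
    removableCount e a m i j =
      (beadLevel e (betaSet (a j) (m j)) i - beadLevel e (betaSet (a j) (m j)) (i - 1)).toNat := by
  refine ncard_residueClass_of_bijOn he (bijOn_content_removable (a j) (m j)) fun q => ?_
  rw [← not_le, hcore.le_beadLevel_sub_one_iff he, hcore.le_beadLevel_iff he]
  exact and_comm

theorem addableCount_eq_toNat (he : 0 < e) (hcore : IsECore e (a j) (m j)) (i : ℤ) :
    addableCount e a m i j =
      (beadLevel e (betaSet (a j) (m j)) (i - 1) - beadLevel e (betaSet (a j) (m j)) i).toNat := by
  refine ncard_residueClass_of_bijOn he (bijOn_content_addable (a j) (m j)) fun q => ?_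
  rw [← not_le, hcore.le_beadLevel_sub_one_iff he, hcore.le_beadLevel_iff he]
  exact and_comm

theorem delta_eq_beadLevel_sub (he : 0 < e) (hcore : IsECore e (a j) (m j)) (i : ℤ) :
    delta e a m i j =
      beadLevel e (betaSet (a j) (m j)) i - beadLevel e (betaSet (a j) (m j)) (i - 1) := by
  rw [delta, removableCount_eq_toNat he hcore, addableCount_eq_toNat he hcore]
  omega

theorem delta_sub_delta_eq_gammaD (he : 0 < e) {k : Fin r} (hj : IsECore e (a j) (m j))
    (hk : IsECore e (a k) (m k)) (i : ℤ) :
    delta e a m i j - delta e a m i k =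
      gammaD e a m (i % e).toNat ((i - 1) % e).toNat j k := by
  simp only [delta_eq_beadLevel_sub he hj, delta_eq_beadLevel_sub he hk,
    hj.beadLevel_eq_level_sub he, hk.beadLevel_eq_level_sub he, gammaD, gamma]
  ring

theorem dmin_le_delta (i : ℤ) (j : Fin r) : dmin e a m i ≤ delta e a m i j :=
  csInf_le (Set.finite_range fun j => delta e a m i j).bddBelow ⟨j, rfl⟩

theorem exists_delta_eq_dmin (hr : 0 < r) (i : ℤ) : ∃ k, delta e a m i k = dmin e a m i :=
  Int.csInf_mem (Set.range_nonempty_iff_nonempty.2 ⟨⟨0, hr⟩⟩)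
    (Set.finite_range fun j => delta e a m i j).bddBelow

end Delta

/-- Lemma 4.4: if `m` is a multicore with `|γ^{jk}_{il}(m)| ≤ 2` for
all `i, l, j, k`, and `d_ī(m) = d − 1`, then `δ^j_ī(m) ∈ {d−1, d, d+1}` for all `j`. -/
theorem stmt_3 {e r : ℕ} (he : 2 ≤ e) (hr : 0 < r) (a : Fin r → ℤ)
    (m : Multipartition r) (hcore : IsMulticore e a m)
    (hg : ∀ i < e, ∀ l < e, ∀ j k : Fin r, |gammaD e a m i l j k| ≤ 2)
    (ibar : ℤ) (d : ℤ) (hd : dmin e a m ibar = d - 1) :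
    ∀ j : Fin r, delta e a m ibar j = d - 1 ∨ delta e a m ibar j = d ∨
      delta e a m ibar j = d + 1 := by
  intro j
  have he0 : 0 < e := by omega
  have hrunner (i : ℤ) : (i % e).toNat < e := by
    have := Int.emod_lt_of_pos i (Int.natCast_pos.2 he0)
    omega
  obtain ⟨k, hk⟩ : ∃ k, delta e a m ibar k = dmin e a m ibar := exists_delta_eq_dmin hr ibar
  have hlower : dmin e a m ibar ≤ delta e a m ibar j := dmin_le_delta ibar j
  have hupper : delta e a m ibar j - delta e a m ibar k ≤ 2 := by
    rw [delta_sub_delta_eq_gammaD he0 (hcore j) (hcore k)]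
    exact (le_abs_self _).trans (hg _ (hrunner _) _ (hrunner _) j k)
  omega

end AK
end
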